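/- arXiv:2111.03955 — 2 statements merged into one kernel-verified Lean document; each statement's English description precedes it below -/
import Mathlib

section
/- Let d ≥ 1 and 0 < r < 1, and let a be a symbol of class S⁰_ph on ℝ^d. Set γ = r/(r + 1 + d/2). There exists a constant C, depending only on d, r and a, such that for every Schwartz function f on ℝ^d with [f]_{−1} := ((2π)^{−d} ∫_{ℝ^d} |κ|^{−2} |f̂(κ)|² dκ)^{1/2} < ∞ one has ‖𝔞[f]‖_{L^∞} ≤ C · [f]_{−1}^{γ} · {f}_r^{1−γ}. -/
open MeasureTheory ENNReal
open scoped RealInnerProductSpace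

noncomputable section

/-- Shorthand for Euclidean space `ℝ^d`. -/
abbrev Ed (d : ℕ) := EuclideanSpace ℝ (Fin d)

/-- The homogeneous Besov (Gagliardo) seminorm `[f]_{r,p}`. -/
def gagliardo (d : ℕ) (r p : ℝ) {F : Type*} [NormedAddCommGroup F] (f : Ed d → F) : ℝ≥0∞ :=
  (∫⁻ x, ∫⁻ y, (‖f x - f y‖₊ : ℝ≥0∞) ^ p / (‖x - y‖₊ : ℝ≥0∞) ^ (r * p + d)) ^ (1 / p)

/-- The homogeneous Hölder seminorm `{f}_r`. -/
def holderSemi (d : ℕ) (r : ℝ) {F : Type*} [NormedAddCommGroup F] (f : Ed d → F) : ℝ≥0∞ :=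
  ⨆ x, ⨆ y, (‖f x - f y‖₊ : ℝ≥0∞) / (‖x - y‖₊ : ℝ≥0∞) ^ r

/-- The Fourier transform `f̂(κ) = ∫ e^{-i x·κ} f(x) dx`. -/
def ftransform (d : ℕ) (f : Ed d → ℂ) (κ : Ed d) : ℂ :=
  ∫ x, Complex.exp (-(Complex.I * (⟪x, κ⟫ : ℂ))) * f x

/-- The homogeneous Sobolev seminorm `[f]_θ = ((2π)^{-d} ∫ |κ|^{2θ} |f̂(κ)|² dκ)^{1/2}`. -/
def sobolevSemi (d : ℕ) (θ : ℝ) (f : Ed d → ℂ) : ℝ≥0∞ :=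
  (ENNReal.ofReal ((2 * Real.pi) ^ (-(d : ℝ))) *
    ∫⁻ κ, (‖κ‖₊ : ℝ≥0∞) ^ (2 * θ) * (‖ftransform d f κ‖₊ : ℝ≥0∞) ^ (2 : ℕ)) ^ ((1 : ℝ) / 2)

/-- A symbol of class `S⁰_{ph}`: smooth away from the origin and positively
homogeneous of degree `0`. -/
def IsSymbol0 (d : ℕ) (a : Ed d → ℂ) : Prop :=
  ContDiffOn ℝ (⊤ : ℕ∞) a {0}ᶜ ∧ ∀ (c : ℝ) (κ : Ed d), 0 < c → κ ≠ 0 → a (c • κ) = a κ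

/-- The operator `𝔞[f](x) = (2π)^{-d} ∫ e^{i x·κ} a(κ) f̂(κ) dκ` associated with a symbol. -/
def symbOp (d : ℕ) (a : Ed d → ℂ) (f : Ed d → ℂ) (x : Ed d) : ℂ :=
  (((2 * Real.pi) ^ (-(d : ℝ)) : ℝ) : ℂ) *
    ∫ κ, Complex.exp (Complex.I * (⟪x, κ⟫ : ℂ)) * a κ * ftransform d f κ

/-- The partial derivative `∂_i f(x)`. -/
def pd (d : ℕ) (i : Fin d) (f : Ed d → ℝ) (x : Ed d) : ℝ :=
  fderiv ℝ f x (EuclideanSpace.single i 1)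

/-- The half-wave propagator `(e^{itD} g)(x) = (2π)^{-d} ∫ e^{i x·κ} e^{i t|κ|} ĝ(κ) dκ`. -/
def halfWave (d : ℕ) (t : ℝ) (g : Ed d → ℂ) (x : Ed d) : ℂ :=
  (((2 * Real.pi) ^ (-(d : ℝ)) : ℝ) : ℂ) *
    ∫ κ, Complex.exp (Complex.I * ((⟪x, κ⟫ : ℂ) + (t : ℂ) * ((‖κ‖ : ℝ) : ℂ))) *
      ftransform d g κ

end

/-!
Split the symbol at unit frequency. The low-frequency part is controlled by the Sobolev seminorm,
by the Cauchy–Schwarz inequality on the Fourier side. The high-frequency part is a sum of dyadic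
annular pieces; since `a` is homogeneous of degree `0`, the `k`-th piece has the kernel
`2^{kd} K(2^k ·)` for one fixed Schwartz function `K` of mean zero, so that it contributes at most
`C 2^{-kr} {f}_r`, which is summable. This gives `‖𝔞[f]‖_∞ ≤ C ([f]_θ + {f}_r)`. The left-hand side
is invariant under dilations of `f` while the two seminorms scale by `c^{θ - d/2}` and `c^r`, and
the best choice of `c` turns the sum into the product.
-/

open Filter
open scoped FourierTransform NNReal Topology SchwartzMap

section

variable {d : ℕ}

lemma ftransform_eq_fourierIntegral (f : Ed d → ℂ) :
    ftransform d f = VectorFourier.fourierIntegral Real.probChar volume (innerₗ (Ed d)) f := by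
  ext κ
  simp only [ftransform, VectorFourier.fourierIntegral_probChar, innerₗ_apply_apply, smul_eq_mul,
    neg_mul, mul_comm Complex.I]

lemma ftransform_eq_fourier (f : Ed d → ℂ) (κ : Ed d) :
    ftransform d f κ = 𝓕 f ((2 * Real.pi)⁻¹ • κ) := by
  have hπ : (Real.pi : ℂ) ≠ 0 := mod_cast Real.pi_ne_zero
  rw [ftransform, Real.fourier_eq']
  refine integral_congr_ae <| .of_forall fun v ↦ ?_
  simp only [inner_smul_right, smul_eq_mul]
  congr 2
  push_cast
  field_simp

lemma integral_mul_ftransform {f g : Ed d → ℂ} (hf : Integrable f) (hg : Integrable g) :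
    ∫ κ, f κ * ftransform d g κ = ∫ x, ftransform d f x * g x := by
  have h := VectorFourier.integral_fourierIntegral_smul_eq_flip (L := innerₗ (Ed d))
    Real.continuous_probChar continuous_inner hf hg
  simpa only [flip_innerₗ, smul_eq_mul, ← ftransform_eq_fourierIntegral] using h.symm

lemma ftransform_comp_add_right (f : Ed d → ℂ) (x κ : Ed d) :
    ftransform d (fun y ↦ f (y + x)) κ =
      Complex.exp (Complex.I * (⟪x, κ⟫ : ℂ)) * ftransform d f κ := by
  have h := congrFun (VectorFourier.fourierIntegral_comp_add_right Real.probChar volume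
    (innerₗ (Ed d)) f x) κ
  rwa [← ftransform_eq_fourierIntegral, ← ftransform_eq_fourierIntegral, innerₗ_apply_apply,
    Circle.smul_def, Real.probChar_apply, smul_eq_mul, mul_comm _ Complex.I] at h

lemma ftransform_comp_smul (f : Ed d → ℂ) {c : ℝ} (hc : 0 < c) (κ : Ed d) :
    ftransform d (fun x ↦ f (c • x)) κ = (c ^ d : ℝ)⁻¹ • ftransform d f (c⁻¹ • κ) := by
  have h := Measure.integral_comp_smul_of_nonneg (volume : Measure (Ed d))
    (fun x ↦ Complex.exp (-(Complex.I * (⟪x, c⁻¹ • κ⟫ : ℂ))) * f x) c (hR := hc.le)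
  rw [finrank_euclideanSpace_fin] at h
  rw [ftransform, ftransform, ← h]
  simp only [real_inner_smul_left, real_inner_smul_right, inv_mul_cancel_left₀ hc.ne']

lemma exists_schwartzMap_eq_ftransform (f : 𝓢(Ed d, ℂ)) :
    ∃ g : 𝓢(Ed d, ℂ), ⇑g = ftransform d f := by
  have hc : (2 * Real.pi)⁻¹ ≠ 0 := by positivity
  refine ⟨SchwartzMap.compCLMOfContinuousLinearEquiv ℝ
    (ContinuousLinearEquiv.smulLeft (Units.mk0 _ hc)) (𝓕 f), ?_⟩
  ext κ
  rw [ftransform_eq_fourier, ← SchwartzMap.fourier_coe]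
  rfl

lemma integrable_ftransform (f : 𝓢(Ed d, ℂ)) : Integrable (ftransform d f) := by
  obtain ⟨g, hg⟩ := exists_schwartzMap_eq_ftransform f
  exact hg ▸ g.integrable

lemma integral_ftransform (f : 𝓢(Ed d, ℂ)) :
    ∫ κ, ftransform d f κ = (2 * Real.pi : ℝ) ^ d • f 0 := by
  have hinv : ∫ κ, 𝓕 (f : Ed d → ℂ) κ = f 0 := by
    have h := congrFun (f.continuous.fourierInv_fourier_eq f.integrable (𝓕 f).integrable) 0
    simpa [Real.fourierInv_eq'] using h
  simp only [ftransform_eq_fourier]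
  rw [Measure.integral_comp_inv_smul_of_nonneg _ _ (by positivity), finrank_euclideanSpace_fin,
    hinv]

lemma lintegral_comp_smul_of_pos (g : Ed d → ℝ≥0∞) {c : ℝ} (hc : 0 < c) :
    ∫⁻ x, g (c • x) = ENNReal.ofReal (c ^ d)⁻¹ * ∫⁻ x, g x := by
  have hemb : MeasurableEmbedding fun x : Ed d ↦ c • x := measurableEmbedding_const_smul₀ hc.ne'
  rw [← hemb.lintegral_map, Measure.map_addHaar_smul _ hc.ne', lintegral_smul_measure,
    finrank_euclideanSpace_fin, abs_of_pos (by positivity), smul_eq_mul]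

lemma symbOp_comp_smul (m f : Ed d → ℂ) {c : ℝ} (hc : 0 < c) (x : Ed d) :
    symbOp d m (fun y ↦ f (c • y)) x = symbOp d (fun κ ↦ m (c • κ)) f (c • x) := by
  have h := Measure.integral_comp_smul_of_nonneg (volume : Measure (Ed d))
    (fun κ ↦ Complex.exp (Complex.I * (⟪x, κ⟫ : ℂ)) * m κ * ftransform d f (c⁻¹ • κ)) c
    (hR := hc.le)
  rw [finrank_euclideanSpace_fin, ← integral_smul] at h
  simp only [symbOp, ftransform_comp_smul f hc, mul_smul_comm, ← h, real_inner_smul_left,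
    real_inner_smul_right, inv_smul_smul₀ hc.ne']

lemma sobolevSemi_comp_smul (θ : ℝ) (f : Ed d → ℂ) {c : ℝ} (hc : 0 < c) :
    sobolevSemi d θ (fun x ↦ f (c • x)) = ENNReal.ofReal (c ^ (θ - d / 2)) * sobolevSemi d θ f := by
  set G : Ed d → ℝ≥0∞ := fun κ ↦ ‖κ‖ₑ ^ (2 * θ) * ‖ftransform d f κ‖ₑ ^ 2
  have hscale (κ : Ed d) : ‖κ‖ₑ ^ (2 * θ) * ‖ftransform d (fun x ↦ f (c • x)) κ‖ₑ ^ 2 =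
      ENNReal.ofReal (c ^ (2 * θ - 2 * d)) * G (c⁻¹ • κ) := by
    have hκ : ‖κ‖ₑ ^ (2 * θ) = ENNReal.ofReal (c ^ (2 * θ)) * ‖c⁻¹ • κ‖ₑ ^ (2 * θ) := by
      rw [← ofReal_rpow_of_pos hc, ← ENNReal.mul_rpow_of_ne_top ofReal_ne_top enorm_ne_top,
        ← Real.enorm_of_nonneg hc.le, ← enorm_smul, smul_inv_smul₀ hc.ne']
    have hf : ‖ftransform d (fun x ↦ f (c • x)) κ‖ₑ ^ 2 =
        ENNReal.ofReal (c ^ (-(2 * d) : ℝ)) * ‖ftransform d f (c⁻¹ • κ)‖ₑ ^ 2 := by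
      rw [ftransform_comp_smul f hc, enorm_smul, mul_pow, Real.enorm_of_nonneg (by positivity),
        ← ofReal_pow (by positivity), Real.rpow_neg hc.le, inv_pow, ← pow_mul']
      norm_cast
    rw [hκ, hf, mul_mul_mul_comm, ← ofReal_mul (by positivity), ← Real.rpow_add hc, sub_eq_add_neg]
  have hint : ∫⁻ κ, ‖κ‖ₑ ^ (2 * θ) * ‖ftransform d (fun x ↦ f (c • x)) κ‖ₑ ^ 2 =
      ENNReal.ofReal (c ^ (2 * θ - d)) * ∫⁻ κ, G κ := by
    simp only [hscale]
    rw [lintegral_const_mul' _ _ ofReal_ne_top, lintegral_comp_smul_of_pos G (inv_pos.2 hc),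
      ← mul_assoc, ← ofReal_mul (by positivity), inv_pow, inv_inv, ← Real.rpow_natCast,
      ← Real.rpow_add hc]
    ring_nf
  change (_ * ∫⁻ κ, ‖κ‖ₑ ^ (2 * θ) * ‖ftransform d (fun x ↦ f (c • x)) κ‖ₑ ^ 2) ^ _ =
    _ * (_ * ∫⁻ κ, G κ) ^ _
  rw [hint, mul_left_comm, ENNReal.mul_rpow_of_nonneg _ _ (by norm_num),
    ofReal_rpow_of_pos (by positivity), ← Real.rpow_mul hc.le]
  ring_nf

lemma holderSemi_comp_smul {F : Type*} [NormedAddCommGroup F] (r : ℝ) (f : Ed d → F) {c : ℝ}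
    (hc : 0 < c) :
    holderSemi d r (fun x ↦ f (c • x)) = ENNReal.ofReal (c ^ r) * holderSemi d r f := by
  let e : Ed d ≃ Ed d := MulAction.toPerm (Units.mk0 c hc.ne')
  simp only [holderSemi, mul_iSup]
  refine e.iSup_congr fun x ↦ (e.iSup_congr fun y ↦ ?_).symm
  change _ * (‖f (c • x) - f (c • y)‖ₑ / ‖c • x - c • y‖ₑ ^ r) =
    ‖f (c • x) - f (c • y)‖ₑ / ‖x - y‖ₑ ^ r
  rw [← smul_sub, enorm_smul, Real.enorm_of_nonneg hc.le,
    ENNReal.mul_rpow_of_ne_top ofReal_ne_top enorm_ne_top, ofReal_rpow_of_pos hc, ← mul_div_assoc]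
  exact ENNReal.mul_div_mul_left _ _ (ofReal_pos.2 (by positivity)).ne' ofReal_ne_top

lemma enorm_sub_le_holderSemi_mul {F : Type*} [NormedAddCommGroup F] (r : ℝ) (f : Ed d → F)
    (x y : Ed d) : ‖f x - f y‖ₑ ≤ holderSemi d r f * ‖x - y‖ₑ ^ r := by
  rcases eq_or_ne x y with rfl | hxy
  · simp
  have hne : ‖x - y‖ₑ ≠ 0 := enorm_ne_zero.2 (sub_ne_zero.2 hxy)
  rw [← ENNReal.div_le_iff (rpow_pos (pos_iff_ne_zero.2 hne) enorm_ne_top).ne'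
    (rpow_ne_top_of_ne_zero hne enorm_ne_top)]
  exact le_iSup₂ (f := fun x y ↦ ‖f x - f y‖ₑ / ‖x - y‖ₑ ^ r) x y

lemma eq_zero_of_holderSemi_eq_zero [NeZero d] {F : Type*} [NormedAddCommGroup F] {r : ℝ}
    {f : Ed d → F} (hf : Integrable f) (h : holderSemi d r f = 0) : f = 0 := by
  have hconst : f = fun _ ↦ f 0 := by
    ext x
    simpa [h, sub_eq_zero] using enorm_sub_le_holderSemi_mul r f x 0
  have h0 : f 0 = 0 := by
    rw [hconst, integrable_const_iff] at hf
    exact hf.resolve_right (not_isFiniteMeasure_iff.2 (measure_univ_of_isAddLeftInvariant _))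
  rw [hconst, h0]
  rfl

lemma ftransform_ae_eq_zero_of_sobolevSemi_eq_zero [NeZero d] {θ : ℝ} {f : Ed d → ℂ}
    (hf : AEMeasurable (ftransform d f)) (h : sobolevSemi d θ f = 0) :
    ftransform d f =ᵐ[volume] 0 := by
  have hint : ∫⁻ κ, ‖κ‖ₑ ^ (2 * θ) * ‖ftransform d f κ‖ₑ ^ 2 = 0 := by
    rw [sobolevSemi, ENNReal.rpow_eq_zero_iff_of_pos (by norm_num), mul_eq_zero] at h
    exact h.resolve_left (ofReal_pos.2 (by positivity)).ne'
  rw [lintegral_eq_zero_iff' (by fun_prop)] at hint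
  filter_upwards [hint, Measure.ae_ne volume 0] with κ hκ hκ0
  have hpos : ‖κ‖ₑ ^ (2 * θ) ≠ 0 := (rpow_pos (enorm_pos.2 hκ0) enorm_ne_top).ne'
  simpa [hpos] using hκ

lemma enorm_symbOp_le (m f : Ed d → ℂ) (x : Ed d) :
    ‖symbOp d m f x‖ₑ ≤
      ENNReal.ofReal ((2 * Real.pi) ^ (-(d : ℝ))) * ∫⁻ κ, ‖m κ‖ₑ * ‖ftransform d f κ‖ₑ := by
  have hexp (κ : Ed d) : ‖Complex.exp (Complex.I * (⟪x, κ⟫ : ℂ))‖ₑ = 1 := by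
    rw [← ofReal_norm, mul_comm, Complex.norm_exp_ofReal_mul_I, ofReal_one]
  have hconst : ‖(((2 * Real.pi) ^ (-(d : ℝ)) : ℝ) : ℂ)‖ₑ =
      ENNReal.ofReal ((2 * Real.pi) ^ (-(d : ℝ))) := by
    rw [← ofReal_norm, Complex.norm_of_nonneg (by positivity)]
  rw [symbOp, enorm_mul, hconst]
  gcongr
  refine (enorm_integral_le_lintegral_enorm _).trans_eq ?_
  simp only [enorm_mul, hexp, one_mul]

lemma symbOp_eq_zero_of_ftransform_ae_eq_zero (m : Ed d → ℂ) {f : Ed d → ℂ}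
    (hf : ftransform d f =ᵐ[volume] 0) (x : Ed d) : symbOp d m f x = 0 := by
  rw [symbOp, integral_eq_zero_of_ae, mul_zero]
  filter_upwards [hf] with κ hκ
  simp [hκ]

lemma enorm_symbOp_le_mul_sobolevSemi [NeZero d] (θ : ℝ) {m f : Ed d → ℂ} (hm : AEMeasurable m)
    (hf : AEMeasurable (ftransform d f)) (x : Ed d) :
    ‖symbOp d m f x‖ₑ ≤ (ENNReal.ofReal ((2 * Real.pi) ^ (-(d : ℝ))) *
      ∫⁻ κ, ‖κ‖ₑ ^ (-(2 * θ)) * ‖m κ‖ₑ ^ 2) ^ (1 / 2 : ℝ) * sobolevSemi d θ f := by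
  have hsplit : ∫⁻ κ, ‖m κ‖ₑ * ‖ftransform d f κ‖ₑ =
      ∫⁻ κ, ((fun κ ↦ ‖κ‖ₑ ^ (-θ) * ‖m κ‖ₑ) * fun κ ↦ ‖κ‖ₑ ^ θ * ‖ftransform d f κ‖ₑ) κ := by
    refine lintegral_congr_ae ?_
    filter_upwards [Measure.ae_ne volume 0] with κ hκ
    rw [Pi.mul_apply, mul_mul_mul_comm, ← ENNReal.rpow_add _ _ (enorm_ne_zero.2 hκ) enorm_ne_top,
      neg_add_cancel, rpow_zero, one_mul]
  have hsq (p : ℝ) (g : Ed d → ℂ) : ∫⁻ κ, (‖κ‖ₑ ^ p * ‖g κ‖ₑ) ^ (2 : ℝ) =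
      ∫⁻ κ, ‖κ‖ₑ ^ (2 * p) * ‖g κ‖ₑ ^ 2 := by
    simp only [← rpow_two, ENNReal.mul_rpow_of_nonneg _ _ zero_le_two, ← ENNReal.rpow_mul,
      mul_comm p]
  have hCS := lintegral_mul_le_Lp_mul_Lq volume Real.HolderConjugate.two_two
    (f := fun κ : Ed d ↦ ‖κ‖ₑ ^ (-θ) * ‖m κ‖ₑ) (g := fun κ ↦ ‖κ‖ₑ ^ θ * ‖ftransform d f κ‖ₑ)
    (by fun_prop) (by fun_prop)
  rw [← hsplit, hsq, hsq, mul_neg] at hCS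
  set c := ENNReal.ofReal ((2 * Real.pi) ^ (-(d : ℝ)))
  set J₁ := ∫⁻ κ, ‖κ‖ₑ ^ (-(2 * θ)) * ‖m κ‖ₑ ^ 2
  set J₂ := ∫⁻ κ, ‖κ‖ₑ ^ (2 * θ) * ‖ftransform d f κ‖ₑ ^ 2
  change _ ≤ _ * (c * J₂) ^ (1 / 2 : ℝ)
  calc ‖symbOp d m f x‖ₑ
      ≤ c * (J₁ ^ (1 / 2 : ℝ) * J₂ ^ (1 / 2 : ℝ)) := (enorm_symbOp_le m f x).trans (by gcongr)
    _ = c ^ (1 / 2 : ℝ) * c ^ (1 / 2 : ℝ) * (J₁ ^ (1 / 2 : ℝ) * J₂ ^ (1 / 2 : ℝ)) := by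
        rw [← ENNReal.rpow_add_of_nonneg _ _ (by norm_num) (by norm_num), add_halves, rpow_one]
    _ = (c * J₁) ^ (1 / 2 : ℝ) * (c * J₂) ^ (1 / 2 : ℝ) := by
        rw [mul_mul_mul_comm, ← ENNReal.mul_rpow_of_nonneg _ _ (by norm_num),
          ← ENNReal.mul_rpow_of_nonneg _ _ (by norm_num)]

lemma setLIntegral_ball_enorm_rpow_lt_top [NeZero d] {p : ℝ} (hp : -d < p) (R : ℝ) :
    ∫⁻ κ in Metric.ball (0 : Ed d) R, ‖κ‖ₑ ^ p < ⊤ := by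
  have hint : IntegrableOn (fun κ : Ed d ↦ ‖κ‖ ^ p) (Metric.ball 0 R) := by
    refine integrableOn_ball_of_norm_le_rpow (C := 1) (α := -p) ?_ ?_ (.of_forall fun κ ↦ ?_)
      (measurable_norm.pow_const p).aestronglyMeasurable
    · rw [finrank_euclideanSpace_fin]
      exact NeZero.one_le
    · rw [finrank_euclideanSpace_fin]
      linarith
    · rw [neg_neg, one_mul, Real.norm_of_nonneg (by positivity)]
  refine lt_of_eq_of_lt (lintegral_congr_ae ?_) hint.hasFiniteIntegral
  filter_upwards [ae_restrict_of_ae (Measure.ae_ne volume 0)] with κ hκ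
  rw [← ofReal_norm, ofReal_rpow_of_pos (norm_pos_iff.2 hκ), Real.enorm_of_nonneg (by positivity)]

lemma lintegral_enorm_rpow_mul_enorm_sq_lt_top [NeZero d] {m : Ed d → ℂ} {p A R : ℝ}
    (hp : -d < p) (hmA : ∀ κ, ‖m κ‖ ≤ A) (hmR : ∀ κ, R ≤ ‖κ‖ → m κ = 0) :
    ∫⁻ κ, ‖κ‖ₑ ^ p * ‖m κ‖ₑ ^ 2 < ⊤ := by
  have hbound (κ : Ed d) : ‖κ‖ₑ ^ p * ‖m κ‖ₑ ^ 2 ≤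
      (Metric.ball 0 R).indicator (fun κ ↦ ‖κ‖ₑ ^ p * ENNReal.ofReal A ^ 2) κ := by
    by_cases hκ : κ ∈ Metric.ball (0 : Ed d) R
    · rw [Set.indicator_of_mem hκ, ← ofReal_norm (m κ)]
      gcongr
      exact hmA κ
    · simp [hmR κ (by simpa using hκ)]
  refine (lintegral_mono hbound).trans_lt ?_
  rw [lintegral_indicator measurableSet_ball, lintegral_mul_const _ (by fun_prop)]
  exact mul_lt_top (setLIntegral_ball_enorm_rpow_lt_top hp R) (pow_lt_top ofReal_lt_top)

lemma symbOp_eq_integral_ftransform_mul {φ f : Ed d → ℂ} (hφ : Integrable φ) (hf : Integrable f)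
    (x : Ed d) : symbOp d φ f x =
      (((2 * Real.pi) ^ (-(d : ℝ)) : ℝ) : ℂ) * ∫ y, ftransform d φ y * f (y + x) := by
  rw [← integral_mul_ftransform hφ (hf.comp_add_right x), symbOp]
  simp only [ftransform_comp_add_right, mul_left_comm, mul_assoc]

lemma symbOp_eq_integral_ftransform_mul_sub (φ : 𝓢(Ed d, ℂ)) (hφ : φ 0 = 0) {f : Ed d → ℂ}
    (hf : Integrable f) (x : Ed d) : symbOp d φ f x =
      (((2 * Real.pi) ^ (-(d : ℝ)) : ℝ) : ℂ) *
        ∫ y, ftransform d φ y * (f (y + x) - f x) := by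
  obtain ⟨g, hg⟩ := exists_schwartzMap_eq_ftransform φ
  have hmean : ∫ y, g y = 0 := by rw [hg, integral_ftransform, hφ, smul_zero]
  have hgf : Integrable fun y ↦ g y * f (y + x) :=
    (hf.comp_add_right x).bdd_mul g.continuous.aestronglyMeasurable
      (.of_forall fun y ↦ g.toBoundedContinuousFunction.norm_coe_le_norm y)
  rw [symbOp_eq_integral_ftransform_mul φ.integrable hf]
  simp only [← hg, mul_sub]
  rw [integral_sub hgf (g.integrable.mul_const _), integral_mul_const, hmean, zero_mul, sub_zero]

lemma lintegral_enorm_mul_enorm_rpow_lt_top (g : 𝓢(Ed d, ℂ)) {r : ℝ} (hr : 0 ≤ r) :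
    ∫⁻ y, ‖g y‖ₑ * ‖y‖ₑ ^ r < ⊤ := by
  have hbound (y : Ed d) : ‖‖y‖ ^ r * ‖g y‖‖ ≤ ‖g y‖ + ‖y‖ ^ ⌈r⌉₊ * ‖g y‖ := by
    have hy : ‖y‖ ^ r ≤ 1 + ‖y‖ ^ ⌈r⌉₊ := by
      rcases le_total ‖y‖ 1 with h | h
      · linarith [Real.rpow_le_one (norm_nonneg y) h hr, pow_nonneg (norm_nonneg y) ⌈r⌉₊]
      · have := Real.rpow_le_rpow_of_exponent_le h (Nat.le_ceil r)
        rw [Real.rpow_natCast] at this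
        linarith
    rw [Real.norm_of_nonneg (by positivity)]
    linarith [mul_le_mul_of_nonneg_right hy (norm_nonneg (g y))]
  have hint : Integrable fun y ↦ ‖y‖ ^ r * ‖g y‖ :=
    (g.integrable.norm.add (g.integrable_pow_mul volume ⌈r⌉₊)).mono'
      (by fun_prop) (.of_forall hbound)
  refine lt_of_eq_of_lt (lintegral_congr fun y ↦ ?_) hint.hasFiniteIntegral
  rw [enorm_mul, enorm_norm, mul_comm, Real.enorm_rpow_of_nonneg (norm_nonneg y) hr, enorm_norm]

lemma exists_enorm_symbOp_le_mul_holderSemi (φ : 𝓢(Ed d, ℂ)) (hφ : φ 0 = 0) {r : ℝ}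
    (hr : 0 ≤ r) : ∃ C : ℝ≥0, ∀ f : Ed d → ℂ, Integrable f → ∀ x,
      ‖symbOp d φ f x‖ₑ ≤ C * holderSemi d r f := by
  obtain ⟨g, hg⟩ := exists_schwartzMap_eq_ftransform φ
  set c : ℂ := (((2 * Real.pi) ^ (-(d : ℝ)) : ℝ) : ℂ)
  have hfin : ‖c‖ₑ * ∫⁻ y, ‖g y‖ₑ * ‖y‖ₑ ^ r < ⊤ :=
    mul_lt_top enorm_lt_top (lintegral_enorm_mul_enorm_rpow_lt_top g hr)
  refine ⟨(‖c‖ₑ * ∫⁻ y, ‖g y‖ₑ * ‖y‖ₑ ^ r).toNNReal, fun f hf x ↦ ?_⟩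
  rw [coe_toNNReal hfin.ne, symbOp_eq_integral_ftransform_mul_sub φ hφ hf, ← hg, enorm_mul,
    mul_assoc, ← lintegral_mul_const _ (by fun_prop)]
  gcongr
  refine (enorm_integral_le_lintegral_enorm _).trans (lintegral_mono fun y ↦ ?_)
  calc ‖g y * (f (y + x) - f x)‖ₑ = ‖g y‖ₑ * ‖f (y + x) - f x‖ₑ := enorm_mul _ _
    _ ≤ ‖g y‖ₑ * (holderSemi d r f * ‖y‖ₑ ^ r) := by
        gcongr
        simpa using enorm_sub_le_holderSemi_mul r f (y + x) x
    _ = ‖g y‖ₑ * ‖y‖ₑ ^ r * holderSemi d r f := by ring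

namespace IsSymbol0

variable {a : Ed d → ℂ}

lemma apply_smul (ha : IsSymbol0 d a) {c : ℝ} (hc : 0 < c) (κ : Ed d) : a (c • κ) = a κ := by
  rcases eq_or_ne κ 0 with rfl | hκ
  · rw [smul_zero]
  · exact ha.2 c κ hc hκ

lemma exists_norm_le (ha : IsSymbol0 d a) : ∃ A, ∀ κ, ‖a κ‖ ≤ A := by
  have hcont : ContinuousOn a (Metric.sphere 0 1) :=
    ha.1.continuousOn.mono fun κ hκ ↦ ne_zero_of_mem_unit_sphere ⟨κ, hκ⟩
  obtain ⟨A, hA⟩ := (isCompact_sphere (0 : Ed d) 1).exists_bound_of_continuousOn hcont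
  refine ⟨max A ‖a 0‖, fun κ ↦ ?_⟩
  rcases eq_or_ne κ 0 with rfl | hκ
  · exact le_max_right _ _
  · rw [← ha.2 ‖κ‖⁻¹ κ (by positivity) hκ]
    exact le_max_of_le_left (hA _ (by simp [norm_smul, hκ]))

lemma aestronglyMeasurable [NeZero d] (ha : IsSymbol0 d a) : AEStronglyMeasurable a := by
  rw [← Measure.restrict_eq_self_of_ae_mem (s := {0}ᶜ) (Measure.ae_ne volume (0 : Ed d))]
  exact ha.1.continuousOn.aestronglyMeasurable (measurableSet_singleton 0).compl

lemma symbOp_comp_smul_inv_smul (ha : IsSymbol0 d a) (f : Ed d → ℂ) {c : ℝ} (hc : 0 < c)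
    (x : Ed d) : symbOp d a (fun y ↦ f (c • y)) (c⁻¹ • x) = symbOp d a f x := by
  simp only [symbOp_comp_smul a f hc, ha.apply_smul hc, smul_inv_smul₀ hc.ne']

end IsSymbol0

/-- The low-frequency truncation of the symbol `a` by the cutoff `χ` at frequencies of order
`c⁻¹`; it exhausts `a` as `c → 0`. -/
noncomputable def lowPass (χ : ContDiffBump (0 : Ed d)) (a : Ed d → ℂ) (c : ℝ) (κ : Ed d) : ℂ :=
  a κ * (χ (c • κ) : ℂ)

lemma norm_lowPass_le (χ : ContDiffBump (0 : Ed d)) (a : Ed d → ℂ) (c : ℝ) (κ : Ed d) :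
    ‖lowPass χ a c κ‖ ≤ ‖a κ‖ := by
  rw [lowPass, norm_mul, Complex.norm_of_nonneg χ.nonneg]
  exact mul_le_of_le_one_right (norm_nonneg _) χ.le_one

lemma lowPass_eventuallyEq (χ : ContDiffBump (0 : Ed d)) (a : Ed d → ℂ) (c : ℝ) :
    lowPass χ a c =ᶠ[𝓝 0] a := by
  have hlim : Tendsto (fun κ : Ed d ↦ c • κ) (𝓝 0) (𝓝 0) := by
    simpa using (continuous_const_smul (T := Ed d) c).tendsto 0
  filter_upwards [hlim.eventually χ.eventuallyEq_one] with κ hκ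
  simp [lowPass, hκ]

lemma tendsto_lowPass (χ : ContDiffBump (0 : Ed d)) (a : Ed d → ℂ) (κ : Ed d) :
    Tendsto (lowPass χ a · κ) (𝓝 0) (𝓝 (a κ)) := by
  have hcont : Continuous fun c : ℝ ↦ lowPass χ a c κ := by
    have := χ.continuous
    unfold lowPass
    fun_prop
  simpa [lowPass, χ.eventuallyEq_one.eq_of_nhds] using hcont.tendsto 0

lemma hasCompactSupport_lowPass (χ : ContDiffBump (0 : Ed d)) (a : Ed d → ℂ) {c : ℝ}
    (hc : c ≠ 0) : HasCompactSupport (lowPass χ a c) :=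
  ((χ.hasCompactSupport.comp_smul hc).comp_left Complex.ofReal_zero).mul_left

namespace IsSymbol0

variable {a : Ed d → ℂ}

lemma lowPass_smul (ha : IsSymbol0 d a) (χ : ContDiffBump (0 : Ed d)) (b : ℝ) {c : ℝ}
    (hc : 0 < c) (κ : Ed d) : lowPass χ a b (c • κ) = lowPass χ a (b * c) κ := by
  rw [lowPass, lowPass, ha.apply_smul hc, smul_smul]

lemma contDiffAt_lowPass (ha : IsSymbol0 d a) (χ : ContDiffBump (0 : Ed d)) (c : ℝ) {κ : Ed d}
    (hκ : κ ≠ 0) : ContDiffAt ℝ (⊤ : ℕ∞) (lowPass χ a c) κ :=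
  (ha.1.contDiffAt (isOpen_compl_singleton.mem_nhds hκ)).mul
    (Complex.ofRealCLM.contDiff.comp (χ.contDiff.comp (contDiff_const_smul c))).contDiffAt

lemma exists_schwartzMap_eq_lowPass_sub (ha : IsSymbol0 d a) (χ : ContDiffBump (0 : Ed d))
    {b c : ℝ} (hb : b ≠ 0) (hc : c ≠ 0) :
    ∃ φ : 𝓢(Ed d, ℂ), ⇑φ = lowPass χ a b - lowPass χ a c := by
  have hsmooth : ContDiff ℝ (⊤ : ℕ∞) (lowPass χ a b - lowPass χ a c) := by
    refine contDiff_iff_contDiffAt.2 fun κ ↦ ?_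
    rcases eq_or_ne κ 0 with rfl | hκ
    · have hzero : lowPass χ a b - lowPass χ a c =ᶠ[𝓝 0] fun _ ↦ 0 := by
        filter_upwards [lowPass_eventuallyEq χ a b, lowPass_eventuallyEq χ a c] with κ hκb hκc
        simp [hκb, hκc]
      exact contDiffAt_const.congr_of_eventuallyEq hzero
    · exact (ha.contDiffAt_lowPass χ b hκ).sub (ha.contDiffAt_lowPass χ c hκ)
  exact ⟨((hasCompactSupport_lowPass χ a hb).sub
    (hasCompactSupport_lowPass χ a hc)).toSchwartzMap hsmooth, rfl⟩

lemma aestronglyMeasurable_lowPass [NeZero d] (ha : IsSymbol0 d a) (χ : ContDiffBump (0 : Ed d))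
    (c : ℝ) : AEStronglyMeasurable (lowPass χ a c) :=
  ha.aestronglyMeasurable.mul (Complex.continuous_ofReal.comp
    (χ.continuous.comp (continuous_const_smul c))).aestronglyMeasurable

end IsSymbol0

lemma integrable_exp_mul_mul_ftransform {m f : Ed d → ℂ} {A : ℝ} (hm : AEStronglyMeasurable m)
    (hA : ∀ κ, ‖m κ‖ ≤ A) (hf : Integrable (ftransform d f)) (x : Ed d) :
    Integrable fun κ ↦ Complex.exp (Complex.I * (⟪x, κ⟫ : ℂ)) * m κ * ftransform d f κ := by
  refine hf.bdd_mul (c := A) (by fun_prop) (.of_forall fun κ ↦ ?_)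
  rw [norm_mul, mul_comm Complex.I, Complex.norm_exp_ofReal_mul_I, one_mul]
  exact hA κ

lemma symbOp_sub {m₁ m₂ f : Ed d → ℂ} {A : ℝ} (hm₁ : AEStronglyMeasurable m₁)
    (hm₂ : AEStronglyMeasurable m₂) (hA₁ : ∀ κ, ‖m₁ κ‖ ≤ A) (hA₂ : ∀ κ, ‖m₂ κ‖ ≤ A)
    (hf : Integrable (ftransform d f)) (x : Ed d) :
    symbOp d (m₁ - m₂) f x = symbOp d m₁ f x - symbOp d m₂ f x := by
  simp only [symbOp, Pi.sub_apply, mul_sub, sub_mul]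
  rw [integral_sub (integrable_exp_mul_mul_ftransform hm₁ hA₁ hf x)
    (integrable_exp_mul_mul_ftransform hm₂ hA₂ hf x), mul_sub]

lemma tendsto_symbOp {ι : Type*} {l : Filter ι} [l.IsCountablyGenerated] {m : ι → Ed d → ℂ}
    {m₀ f : Ed d → ℂ} {A : ℝ} (hm : ∀ i, AEStronglyMeasurable (m i)) (hA : ∀ i κ, ‖m i κ‖ ≤ A)
    (hlim : ∀ κ, Tendsto (m · κ) l (𝓝 (m₀ κ))) (hf : Integrable (ftransform d f)) (x : Ed d) :
    Tendsto (fun i ↦ symbOp d (m i) f x) l (𝓝 (symbOp d m₀ f x)) := by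
  refine (tendsto_integral_filter_of_dominated_convergence (fun κ ↦ A * ‖ftransform d f κ‖)
    (.of_forall fun i ↦ (integrable_exp_mul_mul_ftransform (hm i) (hA i) hf x).1)
    (.of_forall fun i ↦ .of_forall fun κ ↦ ?_) (hf.norm.const_mul A)
    (.of_forall fun κ ↦ ((hlim κ).const_mul _).mul_const _)).const_mul _
  rw [norm_mul, norm_mul, mul_comm Complex.I, Complex.norm_exp_ofReal_mul_I, one_mul]
  gcongr
  exact hA i κ

namespace IsSymbol0

variable {a : Ed d → ℂ}

lemma exists_enorm_symbOp_lowPass_le_mul_sobolevSemi [NeZero d] (ha : IsSymbol0 d a)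
    (χ : ContDiffBump (0 : Ed d)) {θ : ℝ} (hθ : θ < d / 2) :
    ∃ C : ℝ≥0, ∀ f, AEMeasurable (ftransform d f) → ∀ x,
      ‖symbOp d (lowPass χ a 1) f x‖ₑ ≤ C * sobolevSemi d θ f := by
  obtain ⟨A, hA⟩ := ha.exists_norm_le
  have hsupp (κ : Ed d) (hκ : χ.rOut ≤ ‖κ‖) : lowPass χ a 1 κ = 0 := by
    rw [lowPass, one_smul, χ.zero_of_le_dist (by rwa [dist_zero_right]), Complex.ofReal_zero,
      mul_zero]
  have hfin : (ENNReal.ofReal ((2 * Real.pi) ^ (-(d : ℝ))) *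
      ∫⁻ κ, ‖κ‖ₑ ^ (-(2 * θ)) * ‖lowPass χ a 1 κ‖ₑ ^ 2) ^ (1 / 2 : ℝ) < ⊤ :=
    rpow_lt_top_of_nonneg (by norm_num) (mul_lt_top ofReal_lt_top
      (lintegral_enorm_rpow_mul_enorm_sq_lt_top (by linarith)
        (fun κ ↦ (norm_lowPass_le χ a 1 κ).trans (hA κ)) hsupp)).ne
  obtain ⟨C, hC, -⟩ := lt_iff_exists_coe.1 hfin
  exact ⟨C, fun f hf x ↦ hC ▸ enorm_symbOp_le_mul_sobolevSemi θ
    (ha.aestronglyMeasurable_lowPass χ 1).aemeasurable hf x⟩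

lemma exists_edist_symbOp_lowPass_le_mul_holderSemi [NeZero d] (ha : IsSymbol0 d a)
    (χ : ContDiffBump (0 : Ed d)) {r : ℝ} (hr : 0 ≤ r) :
    ∃ C : ℝ≥0, ∀ f, Integrable f → Integrable (ftransform d f) → ∀ c > 0, ∀ x,
      edist (symbOp d (lowPass χ a c) f x) (symbOp d (lowPass χ a (2⁻¹ * c)) f x) ≤
        C * (ENNReal.ofReal (c ^ r) * holderSemi d r f) := by
  obtain ⟨A, hA⟩ := ha.exists_norm_le
  obtain ⟨φ, hφ⟩ := ha.exists_schwartzMap_eq_lowPass_sub χ (inv_ne_zero two_ne_zero) one_ne_zero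
  have hφ0 : φ 0 = 0 := by simp [hφ, lowPass]
  obtain ⟨C, hC⟩ := exists_enorm_symbOp_le_mul_holderSemi φ hφ0 hr
  refine ⟨C, fun f hf hf' c hc x ↦ ?_⟩
  have hdilate : symbOp d φ (fun y ↦ f (c • y)) (c⁻¹ • x) =
      symbOp d (lowPass χ a (2⁻¹ * c)) f x - symbOp d (lowPass χ a c) f x := by
    have hφc : (fun κ ↦ φ (c • κ)) = lowPass χ a (2⁻¹ * c) - lowPass χ a c := by
      ext κ
      simp only [hφ, Pi.sub_apply, ha.lowPass_smul χ _ hc, one_mul]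
    have hbound (b : ℝ) (κ : Ed d) := (norm_lowPass_le χ a b κ).trans (hA κ)
    rw [symbOp_comp_smul φ f hc, smul_inv_smul₀ hc.ne', hφc,
      symbOp_sub (ha.aestronglyMeasurable_lowPass χ _) (ha.aestronglyMeasurable_lowPass χ _)
        (hbound _) (hbound _) hf']
  rw [edist_comm, edist_eq_enorm_sub, ← hdilate, ← holderSemi_comp_smul r f hc]
  exact hC _ (hf.comp_smul hc.ne') _

lemma exists_edist_symbOp_le_mul_holderSemi [NeZero d] (ha : IsSymbol0 d a)
    (χ : ContDiffBump (0 : Ed d)) {r : ℝ} (hr : 0 < r) :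
    ∃ C : ℝ≥0, ∀ f, Integrable f → Integrable (ftransform d f) → ∀ x,
      edist (symbOp d (lowPass χ a 1) f x) (symbOp d a f x) ≤ C * holderSemi d r f := by
  obtain ⟨A, hA⟩ := ha.exists_norm_le
  obtain ⟨B, hB⟩ := ha.exists_edist_symbOp_lowPass_le_mul_holderSemi χ hr.le
  have hsum : ∑' n : ℕ, ENNReal.ofReal (((2⁻¹ : ℝ) ^ n) ^ r) ≠ ⊤ := by
    have hlt : (2⁻¹ : ℝ) ^ r < 1 := Real.rpow_lt_one (by norm_num) (by norm_num) hr
    simp only [← Real.rpow_pow_comm (show (0 : ℝ) ≤ 2⁻¹ by norm_num)]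
    exact (summable_geometric_of_lt_one (by positivity) hlt).tsum_ofReal_ne_top
  refine ⟨B * (∑' n : ℕ, ENNReal.ofReal (((2⁻¹ : ℝ) ^ n) ^ r)).toNNReal, fun f hf hf' x ↦ ?_⟩
  have hlim : Tendsto (fun n : ℕ ↦ symbOp d (lowPass χ a (2⁻¹ ^ n)) f x) atTop
      (𝓝 (symbOp d a f x)) :=
    tendsto_symbOp (fun n ↦ ha.aestronglyMeasurable_lowPass χ _)
      (fun n κ ↦ (norm_lowPass_le χ a _ κ).trans (hA κ))
      (fun κ ↦ (tendsto_lowPass χ a κ).comp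
        (tendsto_pow_atTop_nhds_zero_of_lt_one (by norm_num) (by norm_num))) hf' x
  have hstep (n : ℕ) := by simpa only [← pow_succ'] using hB f hf hf' (2⁻¹ ^ n) (by positivity) x
  have htsum := edist_le_tsum_of_edist_le_of_tendsto₀ _ hstep hlim
  rwa [pow_zero, ENNReal.tsum_mul_left, ENNReal.tsum_mul_right, ← mul_assoc,
    ← coe_toNNReal hsum, ← coe_mul] at htsum

lemma exists_enorm_symbOp_le_add [NeZero d] (ha : IsSymbol0 d a) {r θ : ℝ} (hr : 0 < r)
    (hθ : θ < d / 2) :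
    ∃ C : ℝ≥0, ∀ f, Integrable f → Integrable (ftransform d f) → ∀ x,
      ‖symbOp d a f x‖ₑ ≤ C * (sobolevSemi d θ f + holderSemi d r f) := by
  obtain ⟨C₁, hC₁⟩ := ha.exists_enorm_symbOp_lowPass_le_mul_sobolevSemi default hθ
  obtain ⟨C₂, hC₂⟩ := ha.exists_edist_symbOp_le_mul_holderSemi default hr
  refine ⟨max C₁ C₂, fun f hf hf' x ↦ ?_⟩
  set T := symbOp d (lowPass default a 1) f x
  calc ‖symbOp d a f x‖ₑ ≤ ‖T‖ₑ + edist T (symbOp d a f x) := by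
        rw [add_comm, ← edist_zero_right, ← edist_zero_right, edist_comm T]
        exact edist_triangle _ _ _
    _ ≤ C₁ * sobolevSemi d θ f + C₂ * holderSemi d r f :=
        add_le_add (hC₁ f hf'.1.aemeasurable x) (hC₂ f hf hf' x)
    _ ≤ ↑(max C₁ C₂) * (sobolevSemi d θ f + holderSemi d r f) := by
        rw [mul_add]
        gcongr <;> simp

lemma exists_enorm_symbOp_le_rpow_mul_add [NeZero d] (ha : IsSymbol0 d a) {r θ : ℝ} (hr : 0 < r)
    (hθ : θ < d / 2) :
    ∃ C : ℝ≥0, ∀ f, Integrable f → Integrable (ftransform d f) → ∀ x, ∀ c > 0,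
      ‖symbOp d a f x‖ₑ ≤ C * (ENNReal.ofReal (c ^ (θ - d / 2)) * sobolevSemi d θ f +
        ENNReal.ofReal (c ^ r) * holderSemi d r f) := by
  obtain ⟨C, hC⟩ := ha.exists_enorm_symbOp_le_add hr hθ
  refine ⟨C, fun f hf hf' x c hc ↦ ?_⟩
  have hfc' : Integrable (ftransform d fun y ↦ f (c • y)) := by
    rw [funext (ftransform_comp_smul f hc)]
    exact (hf'.comp_smul (inv_ne_zero hc.ne')).smul (c ^ d : ℝ)⁻¹
  rw [← ha.symbOp_comp_smul_inv_smul f hc, ← sobolevSemi_comp_smul θ f hc,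
    ← holderSemi_comp_smul r f hc]
  exact hC _ (hf.comp_smul hc.ne') hfc' _

end IsSymbol0

lemma exists_rpow_mul_eq {A B r t : ℝ} (hA : 0 < A) (hB : 0 < B) (hrt : r ≠ t) :
    ∃ c > 0, c ^ t * A = A ^ (r / (r - t)) * B ^ (1 - r / (r - t)) ∧
      c ^ r * B = A ^ (r / (r - t)) * B ^ (1 - r / (r - t)) := by
  have hsub : r - t ≠ 0 := sub_ne_zero.2 hrt
  obtain ⟨α, rfl⟩ : ∃ α, Real.exp α = A := ⟨_, Real.exp_log hA⟩
  obtain ⟨β, rfl⟩ : ∃ β, Real.exp β = B := ⟨_, Real.exp_log hB⟩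
  refine ⟨Real.exp ((α - β) / (r - t)), Real.exp_pos _, ?_, ?_⟩ <;>
  · simp only [← Real.exp_mul, ← Real.exp_add, Real.exp_eq_exp]
    field

lemma exists_ofReal_rpow_mul_eq {A B : ℝ≥0∞} {r t : ℝ} (hA : A ≠ 0) (hA' : A ≠ ⊤) (hB : B ≠ 0)
    (hB' : B ≠ ⊤) (hrt : r ≠ t) :
    ∃ c : ℝ, 0 < c ∧ ENNReal.ofReal (c ^ t) * A = A ^ (r / (r - t)) * B ^ (1 - r / (r - t)) ∧
      ENNReal.ofReal (c ^ r) * B = A ^ (r / (r - t)) * B ^ (1 - r / (r - t)) := by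
  obtain ⟨c, hc, hcA, hcB⟩ := exists_rpow_mul_eq (toReal_pos hA hA') (toReal_pos hB hB') hrt
  have hP : A ^ (r / (r - t)) * B ^ (1 - r / (r - t)) ≠ ⊤ :=
    mul_ne_top (rpow_ne_top_of_ne_zero hA hA') (rpow_ne_top_of_ne_zero hB hB')
  refine ⟨c, hc, (toReal_eq_toReal_iff' (mul_ne_top ofReal_ne_top hA') hP).1 ?_,
    (toReal_eq_toReal_iff' (mul_ne_top ofReal_ne_top hB') hP).1 ?_⟩ <;>
  simpa only [toReal_mul, ← toReal_rpow, toReal_ofReal (Real.rpow_nonneg hc.le _)]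

lemma le_mul_rpow_mul_rpow_of_forall_le {L C A B : ℝ≥0∞} {r t : ℝ} (hr : 0 < r) (ht : t < 0)
    (hA : A ≠ 0) (hB : B ≠ 0)
    (hL : ∀ c : ℝ, 0 < c → L ≤ C * (ENNReal.ofReal (c ^ t) * A + ENNReal.ofReal (c ^ r) * B)) :
    L ≤ 2 * C * (A ^ (r / (r - t)) * B ^ (1 - r / (r - t))) := by
  have hγ : 0 < r / (r - t) := div_pos hr (by linarith)
  have hγ' : 0 < 1 - r / (r - t) := sub_pos.2 ((div_lt_one (by linarith)).2 (by linarith))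
  set P := A ^ (r / (r - t)) * B ^ (1 - r / (r - t))
  have hAP (h : A = ⊤) : P = ⊤ := by
    simp_rw [P, h, top_rpow_of_pos hγ]
    exact top_mul ((rpow_eq_zero_iff_of_pos hγ').not.2 hB)
  have hBP (h : B = ⊤) : P = ⊤ := by
    simp_rw [P, h, top_rpow_of_pos hγ']
    exact mul_top ((rpow_eq_zero_iff_of_pos hγ).not.2 hA)
  rcases eq_or_ne P ⊤ with hP | hP
  · calc L ≤ C * ⊤ := (hL 1 one_pos).trans (by gcongr; exact le_top)
      _ ≤ 2 * C * P := by
        rw [hP]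
        gcongr
        exact le_mul_of_one_le_left' one_le_two
  · obtain ⟨c, hc, hcA, hcB⟩ :=
      exists_ofReal_rpow_mul_eq hA (mt hAP hP) hB (mt hBP hP) (ht.trans hr).ne'
    calc L ≤ C * (P + P) := (hL c hc).trans_eq (by rw [hcA, hcB])
      _ = 2 * C * P := by ring

end

theorem stmt6_general (d : ℕ) (hd : 1 ≤ d) (r : ℝ) (hr : 0 < r) (θ : ℝ) (hθ : θ < d / 2)
    (a : Ed d → ℂ) (ha : IsSymbol0 d a) :
    ∃ C : ℝ, 0 < C ∧ ∀ f : Ed d → ℂ, Integrable f → Integrable (ftransform d f) →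
      (⨆ x, (‖symbOp d a f x‖₊ : ℝ≥0∞)) ≤
        ENNReal.ofReal C * sobolevSemi d θ f ^ (r / (r - θ + d / 2)) *
          holderSemi d r f ^ (1 - r / (r - θ + d / 2)) := by
  have : NeZero d := ⟨by omega⟩
  obtain ⟨C, hC⟩ := ha.exists_enorm_symbOp_le_rpow_mul_add hr hθ
  refine ⟨2 * C + 1, by positivity, fun f hf hf' ↦ iSup_le fun x ↦ ?_⟩
  by_cases hzero : ftransform d f =ᵐ[volume] 0
  · simp [symbOp_eq_zero_of_ftransform_ae_eq_zero a hzero x]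
  have hS : sobolevSemi d θ f ≠ 0 :=
    mt (ftransform_ae_eq_zero_of_sobolevSemi_eq_zero hf'.1.aemeasurable) hzero
  have hH : holderSemi d r f ≠ 0 := by
    refine mt (fun h ↦ .of_forall fun κ ↦ ?_) hzero
    simp [ftransform, eq_zero_of_holderSemi_eq_zero hf h]
  have hbound := le_mul_rpow_mul_rpow_of_forall_le hr (sub_neg.2 hθ) hS hH (hC f hf hf' x)
  rw [← sub_add] at hbound
  rw [mul_assoc]
  refine hbound.trans ?_
  gcongr
  rw [ofReal_add (by positivity) zero_le_one, ofReal_mul zero_le_two, ofReal_coe_nnreal,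
    ofReal_ofNat]
  exact le_self_add

/-- For a symbol `a ∈ S⁰_{ph}`, `0 < r < 1`, and `γ = r/(r + 1 + d/2)`,
one has `‖𝔞[f]‖_∞ ≤ C [f]_{−1}^{γ} {f}_r^{1−γ}` for Schwartz `f` with `[f]_{−1} < ∞`. -/
theorem stmt6 (d : ℕ) (hd : 1 ≤ d) (r : ℝ) (hr0 : 0 < r) (hr1 : r < 1)
    (a : Ed d → ℂ) (ha : IsSymbol0 d a) :
    ∃ C : ℝ, 0 < C ∧ ∀ f : SchwartzMap (Ed d) ℂ,
      sobolevSemi d (-1) ⇑f ≠ ⊤ →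
      (⨆ x, (‖symbOp d a (⇑f) x‖₊ : ℝ≥0∞))
        ≤ ENNReal.ofReal C *
            sobolevSemi d (-1) ⇑f ^ (r / (r + 1 + d / 2)) *
            holderSemi d r ⇑f ^ (1 - r / (r + 1 + d / 2)) := by
  obtain ⟨C, hC, h⟩ := stmt6_general d hd r hr0 (-1) (neg_one_lt_zero.trans_le (by positivity)) a ha
  exact ⟨C, hC, fun f _ ↦ by simpa using h f f.integrable (integrable_ftransform f)⟩
end

section
/- Let 0 < r < 1. There exists a constant C, depending only on r, such that for every Schwartz vector field v = (v¹, v²) : ℝ² → ℝ² with div v = 0 and vorticity ω = ∂₁v² − ∂₂v¹, one has both ‖∇v‖_{L^∞} ≤ C · ‖v‖_{L²}^{r/(r+2)} · {ω}_r^{2/(r+2)} and ‖ω‖_{L^∞} ≤ C · ‖v‖_{L²}^{r/(r+2)} · {ω}_r^{2/(r+2)}, where ‖∇v‖_{L^∞} is the supremum over x of the norm of the Jacobian matrix of v. -/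
open MeasureTheory ENNReal
open scoped RealInnerProductSpace

/-!
Fix a radial bump `Γ` and the positive kernel `G` with `∇Γ(y) = -G(y) y`, and average
`∂ⱼvⁱ` over the scale `s`: `F(s) = ∫ ∂ⱼvⁱ(x + s y) G(y) dy`. Then `F(0)` is a positive multiple of
`∂ⱼvⁱ(x)`. Since `y G = -∇Γ`, one integration by parts gives `F'(s) = s ∫ Δ∂ⱼvⁱ(x + s y) Γ(y) dy`,
and incompressibility turns `Δvⁱ` into `±∂ₖω`. Two more integrations by parts move both derivatives
onto `Γ`, whose second derivatives have mean zero, so Hölder continuity yields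
`|F'(s)| ≲ {ω}ᵣ s^(r-1)`. At scale `R`, one integration by parts and Cauchy–Schwarz give
`|F(R)| ≲ R⁻² ‖v‖₂`. Integrating `F'` over `[0, R]`, `|∂ⱼvⁱ(x)| ≲ {ω}ᵣ R^r + R⁻² ‖v‖₂`, and the
theorem follows by choosing the best `R`.
-/

section RealAnalysis

variable {F : Type*} [NormedAddCommGroup F] [NormedSpace ℝ F]

theorem norm_sub_le_of_norm_deriv_le_rpow {f f' : ℝ → F} {r M R : ℝ} (hr : 0 < r) (hR : 0 ≤ R)
    (hcont : ContinuousOn f (Set.Icc 0 R)) (hderiv : ∀ s ∈ Set.Ioc 0 R, HasDerivAt f (f' s) s)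
    (hbound : ∀ s ∈ Set.Ioc 0 R, ‖f' s‖ ≤ M * s ^ (r - 1)) :
    ‖f 0 - f R‖ ≤ M / r * R ^ r := by
  have hmem : ∀ t ∈ Set.Ico 0 R, R - t ∈ Set.Ioc 0 R := fun t ht =>
    ⟨sub_pos.2 ht.2, sub_le_self R ht.1⟩
  have hg : ∀ t ∈ Set.Ico 0 R,
      HasDerivWithinAt (fun t => f (R - t) - f R) (-f' (R - t)) (Set.Ici t) t := fun t ht =>
    (((hderiv _ (hmem t ht)).comp_const_sub R t).sub_const _).hasDerivWithinAt
  have hB : ∀ t ∈ Set.Ico 0 R, HasDerivWithinAt (fun t => M / r * (R ^ r - (R - t) ^ r))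
      (M * (R - t) ^ (r - 1)) (Set.Ici t) t := by
    intro t ht
    have hpow := (Real.hasDerivAt_rpow_const (p := r) (Or.inl (hmem t ht).1.ne')).comp_const_sub R t
    convert! ((hpow.const_sub (R ^ r)).const_mul (M / r)).hasDerivWithinAt using 1
    field_simp
  have hgcont : ContinuousOn (fun t => f (R - t) - f R) (Set.Icc 0 R) :=
    (hcont.comp (by fun_prop) fun t ht => ⟨sub_nonneg.2 ht.2, sub_le_self R ht.1⟩).sub
      continuousOn_const
  have hBcont : Continuous fun t : ℝ => M / r * (R ^ r - (R - t) ^ r) := by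
    have := Real.continuous_rpow_const hr.le
    fun_prop
  have hfence := image_norm_le_of_norm_deriv_right_le_deriv_boundary' hgcont hg (by simp)
    hBcont.continuousOn hB (fun t ht => by simpa using hbound _ (hmem t ht))
    (Set.right_mem_Icc.2 hR)
  simpa [Real.zero_rpow hr.ne'] using hfence

theorem mul_div_rpow_eq {a b θ η : ℝ} (ha : 0 < a) (hb : 0 < b) (h : θ + η = 1) :
    a * (b / a) ^ θ = a ^ η * b ^ θ := by
  obtain rfl : η = 1 - θ := by linarith
  rw [Real.div_rpow hb.le ha.le, Real.rpow_sub ha, Real.rpow_one]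
  ring

theorem le_two_mul_rpow_mul_rpow_of_pos {α β a b N : ℝ} (hα : 0 < α) (hβ : 0 < β) (ha : 0 < a)
    (hb : 0 < b) (h : ∀ R : ℝ, 0 < R → N ≤ a * R ^ α + b * R ^ (-β)) :
    N ≤ 2 * (a ^ (β / (α + β)) * b ^ (α / (α + β))) := by
  have hsum : α / (α + β) + β / (α + β) = 1 := by field_simp
  have hfst : a * ((b / a) ^ (1 / (α + β))) ^ α = a ^ (β / (α + β)) * b ^ (α / (α + β)) := by
    rw [← Real.rpow_mul (by positivity), one_div_mul_eq_div, mul_div_rpow_eq ha hb hsum]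
  have hsnd : b * ((b / a) ^ (1 / (α + β))) ^ (-β) = a ^ (β / (α + β)) * b ^ (α / (α + β)) := by
    rw [← Real.rpow_mul (by positivity), mul_neg, one_div_mul_eq_div,
      Real.rpow_neg (by positivity), ← Real.inv_rpow (by positivity), inv_div,
      mul_div_rpow_eq hb ha (add_comm _ _ |>.trans hsum), mul_comm]
  -- `R = (b / a) ^ (1 / (α + β))` balances the two terms.
  linarith [h ((b / a) ^ (1 / (α + β))) (by positivity)]

theorem le_two_mul_rpow_mul_rpow {α β a b N : ℝ} (hα : 0 < α) (hβ : 0 < β) (ha : 0 ≤ a)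
    (hb : 0 ≤ b) (h : ∀ R : ℝ, 0 < R → N ≤ a * R ^ α + b * R ^ (-β)) :
    N ≤ 2 * (a ^ (β / (α + β)) * b ^ (α / (α + β))) := by
  have hperturbed : ∀ ε : ℝ, 0 < ε →
      N ≤ 2 * ((a + ε) ^ (β / (α + β)) * (b + ε) ^ (α / (α + β))) := fun ε hε =>
    le_two_mul_rpow_mul_rpow_of_pos hα hβ (by positivity) (by positivity) fun R hR =>
      (h R hR).trans (by gcongr <;> linarith)
  have hcont : Continuous fun ε : ℝ =>
      2 * ((a + ε) ^ (β / (α + β)) * (b + ε) ^ (α / (α + β))) := by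
    have := Real.continuous_rpow_const (q := α / (α + β)) (by positivity)
    have := Real.continuous_rpow_const (q := β / (α + β)) (by positivity)
    fun_prop
  have hlim := (hcont.tendsto 0).mono_left (nhdsWithin_le_nhds (s := Set.Ioi 0))
  simp only [add_zero] at hlim
  exact ge_of_tendsto hlim (Filter.eventually_of_mem self_mem_nhdsWithin hperturbed)

end RealAnalysis

section Measure

variable {α 𝕜 : Type*} [MeasurableSpace α] [RCLike 𝕜]

theorem enorm_integral_mul_le_eLpNorm_mul_eLpNorm {μ : Measure α} {p q : ℝ≥0∞}
    [HolderTriple p q 1] {f g : α → 𝕜} (hf : AEStronglyMeasurable f μ)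
    (hg : AEStronglyMeasurable g μ) :
    ‖∫ y, f y * g y ∂μ‖ₑ ≤ eLpNorm f p μ * eLpNorm g q μ := by
  calc ‖∫ y, f y * g y ∂μ‖ₑ ≤ eLpNorm (f • g) 1 μ := by
        rw [eLpNorm_one_eq_lintegral_enorm]
        exact enorm_integral_le_lintegral_enorm _
    _ ≤ eLpNorm f p μ * eLpNorm g q μ := eLpNorm_smul_le_mul_eLpNorm hg hf

theorem eq_zero_of_eLpNorm_eq_zero {X F : Type*} [TopologicalSpace X] [MeasurableSpace X]
    [OpensMeasurableSpace X] [SecondCountableTopology X] [NormedAddCommGroup F] {μ : Measure X}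
    [μ.IsOpenPosMeasure] {f : X → F} {p : ℝ≥0∞} (hf : Continuous f) (hp : p ≠ 0)
    (hzero : eLpNorm f p μ = 0) : f = 0 :=
  (hf.ae_eq_iff_eq μ continuous_zero).1 <|
    (eLpNorm_eq_zero_iff hf.aestronglyMeasurable hp).1 hzero

variable {E F : Type*} [NormedAddCommGroup E] [NormedSpace ℝ E] [FiniteDimensional ℝ E]
  [MeasurableSpace E] [BorelSpace E] [NormedAddCommGroup F]

theorem eLpNorm_comp_add_smul (μ : Measure E) [μ.IsAddHaarMeasure] (f : E → F) (x : E) {s : ℝ}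
    (hs : s ≠ 0) {p : ℝ≥0∞} (hp : p ≠ ∞) :
    eLpNorm (fun y => f (x + s • y)) p μ
      = ENNReal.ofReal |(s ^ Module.finrank ℝ E)⁻¹| ^ (1 / p).toReal * eLpNorm f p μ := by
  calc eLpNorm (fun y => f (x + s • y)) p μ
      = eLpNorm (fun y => f (x + y)) p (μ.map (s • ·)) := by
        rw [(measurableEmbedding_const_smul₀ hs).eLpNorm_map_measure, Function.comp_def]
    _ = ENNReal.ofReal |(s ^ Module.finrank ℝ E)⁻¹| ^ (1 / p).toReal
          * eLpNorm (fun y => f (x + y)) p μ := by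
        rw [Measure.map_addHaar_smul μ hs, eLpNorm_smul_measure_of_ne_top hp, smul_eq_mul]
    _ = _ := by
        rw [← Function.comp_def f, ← (measurableEmbedding_addLeft x).eLpNorm_map_measure,
          map_add_left_eq_self]

end Measure

section Schwartz

open scoped LineDeriv SchwartzMap Laplacian

section NormedSpace

variable {E F : Type*} [NormedAddCommGroup E] [NormedSpace ℝ E] [NormedAddCommGroup F]
  [NormedSpace ℝ F]

theorem lineDerivOp_comm (a b : E) (f : 𝓢(E, F)) : ∂_{a} (∂_{b} f) = ∂_{b} (∂_{a} f) := by
  have hsecond : ∀ (a b : E) (x : E), (∂_{a} (∂_{b} f)) x = fderiv ℝ (fderiv ℝ f) x a b := by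
    intro a b x
    have hdiff : DifferentiableAt ℝ (fderiv ℝ f) x :=
      ((f.smooth 2).fderiv_right (m := 1) (by norm_num)).differentiable (by norm_num) x
    change fderiv ℝ (fun y => fderiv ℝ f y b) x a = _
    simp [fderiv_clm_apply hdiff (differentiableAt_const b)]
  ext x
  rw [hsecond, hsecond]
  exact (f.smooth 2).contDiffAt.isSymmSndFDerivAt (by simp) a b

theorem fderiv_comp_add_smul_apply (f : 𝓢(E, F)) (x : E) (s : ℝ) (y w : E) :
    fderiv ℝ (fun y => f (x + s • y)) y w = s • (∂_{w} f) (x + s • y) := by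
  have hinner : HasFDerivAt (fun y : E => x + s • y) (s • ContinuousLinearMap.id ℝ E) y :=
    ((hasFDerivAt_id y).const_smul s).const_add x
  have hcomp := (f.differentiableAt.hasFDerivAt.comp y hinner).fderiv
  rw [Function.comp_def] at hcomp
  simp [hcomp, SchwartzMap.lineDerivOp_apply_eq_fderiv]

end NormedSpace

variable {E : Type*} [NormedAddCommGroup E] [InnerProductSpace ℝ E] [FiniteDimensional ℝ E]

theorem laplacian_lineDerivOp {F : Type*} [NormedAddCommGroup F] [NormedSpace ℝ F] (a : E)
    (f : 𝓢(E, F)) : Δ (∂_{a} f) = ∂_{a} (Δ f) := by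
  simp only [SchwartzMap.laplacian_eq_sum (stdOrthonormalBasis ℝ E), LineDeriv.lineDerivOp_sum,
    lineDerivOp_comm _ a]

theorem hasCompactSupport_comp_norm_sq {F : Type*} [Zero F] {h : ℝ → F} {c : ℝ}
    (hh : ∀ t, c ≤ t → h t = 0) : HasCompactSupport fun y : E => h (‖y‖ ^ 2) := by
  refine HasCompactSupport.intro (isCompact_closedBall (0 : E) √c) fun y hy => hh _ ?_
  rw [mem_closedBall_zero_iff, not_le] at hy
  exact (Real.sqrt_le_left (norm_nonneg y)).1 hy.le

variable [MeasurableSpace E] [BorelSpace E]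

theorem integral_lineDerivOp_eq_zero (w : E) (g : 𝓢(E, ℝ)) : ∫ y, (∂_{w} g) y = 0 := by
  simpa using! integral_mul_fderiv_eq_neg_fderiv_mul_of_integrable (μ := volume)
    (f := fun _ : E => (1 : ℝ)) (v := w) (by simp) (by simpa using! (∂_{w} g).integrable)
    (by simpa using g.integrable) (by simp) (fun y _ => g.differentiableAt (x := y))

theorem integrable_rpow_norm_mul {r : ℝ} (hr : 0 ≤ r) (g : 𝓢(E, ℝ)) :
    Integrable fun y => ‖y‖ ^ r * ‖g y‖ := by
  refine (g.integrable.norm.add (g.integrable_pow_mul volume ⌈r⌉₊)).mono' ?_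
    (.of_forall fun y => ?_)
  · have := Real.continuous_rpow_const hr
    exact (Continuous.mul (by fun_prop) g.continuous.norm).aestronglyMeasurable
  · have hpow : ‖y‖ ^ r ≤ 1 + ‖y‖ ^ ⌈r⌉₊ := by
      rcases le_total ‖y‖ 1 with hy | hy
      · exact (Real.rpow_le_one (norm_nonneg y) hy hr).trans (by simp)
      · calc ‖y‖ ^ r ≤ ‖y‖ ^ (⌈r⌉₊ : ℝ) := Real.rpow_le_rpow_of_exponent_le hy (Nat.le_ceil r)
          _ ≤ 1 + ‖y‖ ^ ⌈r⌉₊ := by simp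
    rw [Real.norm_of_nonneg (by positivity)]
    calc ‖y‖ ^ r * ‖g y‖ ≤ (1 + ‖y‖ ^ ⌈r⌉₊) * ‖g y‖ := by gcongr
      _ = ‖g y‖ + ‖y‖ ^ ⌈r⌉₊ * ‖g y‖ := by ring

/-- The average of `f` around the point `x` at scale `s`, weighted by the kernel `g`. The
substitution `y ↦ x + s y` is made on the side of `f`, so that `s = 0` is allowed. -/
noncomputable def kernelAverage (f g : 𝓢(E, ℝ)) (x : E) (s : ℝ) : ℝ :=
  ∫ y, f (x + s • y) * g y

theorem integrable_comp_add_smul_mul (f g : 𝓢(E, ℝ)) (x : E) (s : ℝ) :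
    Integrable fun y => f (x + s • y) * g y :=
  g.integrable.bdd_mul (c := SchwartzMap.seminorm ℝ 0 0 f)
    (f.continuous.comp (by fun_prop)).aestronglyMeasurable
    (.of_forall fun _ => f.norm_le_seminorm ℝ _)

theorem kernelAverage_zero_scale (f g : 𝓢(E, ℝ)) (x : E) :
    kernelAverage f g x 0 = f x * ∫ y, g y := by
  simp [kernelAverage, integral_const_mul]

theorem kernelAverage_sum_left {ι : Type*} (t : Finset ι) (f : ι → 𝓢(E, ℝ)) (g : 𝓢(E, ℝ)) (x : E)
    (s : ℝ) : kernelAverage (∑ i ∈ t, f i) g x s = ∑ i ∈ t, kernelAverage (f i) g x s := by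
  simp only [kernelAverage, sum_apply, Finset.sum_mul]
  exact integral_finsetSum t fun i _ => integrable_comp_add_smul_mul (f i) g x s

theorem kernelAverage_lineDerivOp_right (f g : 𝓢(E, ℝ)) (x : E) (s : ℝ) (w : E) :
    kernelAverage f (∂_{w} g) x s = -(s * kernelAverage (∂_{w} f) g x s) := by
  have hdiff : Differentiable ℝ fun y => f (x + s • y) :=
    f.differentiable.comp (by fun_prop : Differentiable ℝ fun y : E => x + s • y)
  have hint : Integrable fun y => fderiv ℝ (fun y => f (x + s • y)) y w * g y := by
    simpa only [fderiv_comp_add_smul_apply, smul_eq_mul, mul_assoc] using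
      (integrable_comp_add_smul_mul (∂_{w} f) g x s).const_mul s
  calc kernelAverage f (∂_{w} g) x s
      = -∫ y, fderiv ℝ (fun y => f (x + s • y)) y w * g y :=
        integral_mul_fderiv_eq_neg_fderiv_mul_of_integrable hint
          (integrable_comp_add_smul_mul f (∂_{w} g) x s) (integrable_comp_add_smul_mul f g x s)
          (fun y _ => hdiff y) (fun _ _ => g.differentiableAt)
    _ = -(s * kernelAverage (∂_{w} f) g x s) := by
        simp only [fderiv_comp_add_smul_apply, smul_eq_mul, mul_assoc, integral_const_mul,
          kernelAverage]

theorem hasDerivAt_kernelAverage (f g : 𝓢(E, ℝ)) (x : E) (s : ℝ) :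
    HasDerivAt (kernelAverage f g x) (∫ y, fderiv ℝ f (x + s • y) y * g y) s := by
  have hfderiv : ∀ z, ‖fderiv ℝ f z‖ ≤ SchwartzMap.seminorm ℝ 0 1 f := fun z => by
    simpa only [norm_iteratedFDeriv_one] using f.norm_iteratedFDeriv_le_seminorm ℝ 1 z
  have hcont : Continuous (fderiv ℝ f) := (f.smooth 1).continuous_fderiv (by norm_num)
  refine (hasDerivAt_integral_of_dominated_loc_of_deriv_le (s := Set.univ)
    (F' := fun t y => fderiv ℝ f (x + t • y) y * g y)
    (bound := fun y => SchwartzMap.seminorm ℝ 0 1 f * (‖y‖ ^ 1 * ‖g y‖))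
    Filter.univ_mem
    (.of_forall fun t => (integrable_comp_add_smul_mul f g x t).aestronglyMeasurable)
    (integrable_comp_add_smul_mul f g x s) ?_ (.of_forall fun y t _ => ?_)
    ((g.integrable_pow_mul volume 1).const_mul _) (.of_forall fun y t _ => ?_)).2
  · exact (((hcont.comp (by fun_prop)).clm_apply continuous_id).mul
      g.continuous).aestronglyMeasurable
  · rw [norm_mul, pow_one, ← mul_assoc]
    gcongr
    exact (fderiv ℝ f (x + t • y)).le_of_opNorm_le (hfderiv _) y
  · have hline : HasDerivAt (fun t : ℝ => x + t • y) y t := by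
      simpa using ((hasDerivAt_id t).smul_const y).const_add x
    exact (f.differentiableAt.hasFDerivAt.comp_hasDerivAt t hline).mul_const _

/-- `Γ` is a potential of the radial vector field `y ↦ -G(y) y`, that is, `∇Γ(y) = -G(y) y`. With
such a pair, the `s`-derivative of an average against `G` can be integrated by parts. -/
def IsRadialPotential (Γ G : 𝓢(E, ℝ)) : Prop :=
  ∀ y w, (∂_{w} Γ) y = -(⟪y, w⟫ * G y)

theorem hasDerivAt_kernelAverage_of_isRadialPotential {Γ G : 𝓢(E, ℝ)}
    (hΓ : IsRadialPotential Γ G) (f : 𝓢(E, ℝ)) (x : E) (s : ℝ) :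
    HasDerivAt (kernelAverage f G x) (s * kernelAverage (Δ f) Γ x s) s := by
  set e := stdOrthonormalBasis ℝ E
  have hexpand : ∀ y, fderiv ℝ f (x + s • y) y * G y
      = ∑ k, -((∂_{e k} f) (x + s • y) * (∂_{e k} Γ) y) := by
    intro y
    conv_lhs => enter [1, 2]; rw [← e.sum_repr y]
    simp only [e.repr_apply_apply, map_sum, map_smul, smul_eq_mul, Finset.sum_mul, hΓ y,
      real_inner_comm y, SchwartzMap.lineDerivOp_apply_eq_fderiv]
    exact Finset.sum_congr rfl fun k _ => by ring
  convert! hasDerivAt_kernelAverage f G x s using 1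
  calc s * kernelAverage (Δ f) Γ x s
      = ∑ k, -kernelAverage (∂_{e k} f) (∂_{e k} Γ) x s := by
        simp only [SchwartzMap.laplacian_eq_sum e, kernelAverage_sum_left,
          kernelAverage_lineDerivOp_right, neg_neg, Finset.mul_sum]
    _ = ∑ k, ∫ y, -((∂_{e k} f) (x + s • y) * (∂_{e k} Γ) y) := by
        simp only [kernelAverage, integral_neg]
    _ = ∫ y, fderiv ℝ f (x + s • y) y * G y := by
        simp only [hexpand]
        exact (integral_finsetSum _ fun k _ => (integrable_comp_add_smul_mul _ _ x s).neg).symm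

theorem abs_kernelAverage_le_of_holder {f g : 𝓢(E, ℝ)} (hg : ∫ y, g y = 0) {r H s : ℝ}
    (hr : 0 ≤ r) (hs : 0 ≤ s) {x : E} (hf : ∀ z, |f z - f x| ≤ H * ‖z - x‖ ^ r) :
    |kernelAverage f g x s| ≤ H * s ^ r * ∫ y, ‖y‖ ^ r * ‖g y‖ := by
  have hcenter : kernelAverage f g x s = ∫ y, (f (x + s • y) - f x) * g y := by
    simp only [sub_mul]
    rw [integral_sub (integrable_comp_add_smul_mul f g x s) (g.integrable.const_mul _),
      integral_const_mul, hg, mul_zero, sub_zero, kernelAverage]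
  rw [hcenter, ← integral_const_mul, ← Real.norm_eq_abs]
  refine norm_integral_le_of_norm_le ((integrable_rpow_norm_mul hr g).const_mul _)
    (.of_forall fun y => ?_)
  have hincr : |f (x + s • y) - f x| ≤ H * (s ^ r * ‖y‖ ^ r) := by
    simpa [norm_smul, abs_of_nonneg hs, Real.mul_rpow hs (norm_nonneg y)] using hf (x + s • y)
  calc ‖(f (x + s • y) - f x) * g y‖ = |f (x + s • y) - f x| * ‖g y‖ := by
        rw [norm_mul, Real.norm_eq_abs]
    _ ≤ H * (s ^ r * ‖y‖ ^ r) * ‖g y‖ := by gcongr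
    _ = H * s ^ r * (‖y‖ ^ r * ‖g y‖) := by ring

theorem abs_kernelAverage_le_eLpNorm (f g : 𝓢(E, ℝ)) (x : E) {s : ℝ} (hs : 0 < s) :
    |kernelAverage f g x s| ≤ s ^ (-(Module.finrank ℝ E / 2 : ℝ)) *
      ((eLpNorm f 2 volume).toReal * (eLpNorm g 2 volume).toReal) := by
  have hcs : ‖kernelAverage f g x s‖ₑ ≤ ENNReal.ofReal (s ^ (-(Module.finrank ℝ E / 2 : ℝ))) *
      (eLpNorm f 2 volume * eLpNorm g 2 volume) := by
    have hscale : ENNReal.ofReal |(s ^ Module.finrank ℝ E)⁻¹| ^ (1 / 2 : ℝ≥0∞).toReal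
        = ENNReal.ofReal (s ^ (-(Module.finrank ℝ E / 2 : ℝ))) := by
      rw [abs_of_pos (by positivity), ENNReal.ofReal_rpow_of_pos (by positivity),
        ← Real.rpow_natCast, ← Real.rpow_neg hs.le, ← Real.rpow_mul hs.le]
      congr 2
      simp
      ring
    rw [← mul_assoc, ← hscale, ← eLpNorm_comp_add_smul volume f x hs.ne' (by norm_num)]
    exact enorm_integral_mul_le_eLpNorm_mul_eLpNorm
      (f.continuous.comp (by fun_prop)).aestronglyMeasurable g.continuous.aestronglyMeasurable
  have hfin := (f.memLp 2).eLpNorm_ne_top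
  have hgin := (g.memLp 2).eLpNorm_ne_top
  have hreal := ENNReal.toReal_mono (by finiteness) hcs
  rwa [toReal_enorm, Real.norm_eq_abs, ENNReal.toReal_mul, ENNReal.toReal_mul,
    ENNReal.toReal_ofReal (by positivity)] at hreal

section RadialPotential

open scoped ContDiff

theorem exists_smooth_antitone_cutoff : ∃ φ : ℝ → ℝ, ContDiff ℝ ∞ φ ∧ Antitone φ ∧
    (∀ t, 2 ≤ t → φ t = 0) ∧ ∃ t, 0 < t ∧ deriv φ t ≠ 0 := by
  set φ : ℝ → ℝ := fun t => Real.smoothTransition (2 - t)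
  have hsmooth : ContDiff ℝ ∞ φ := Real.smoothTransition.contDiff.comp (by fun_prop)
  have hzero : ∀ t, 2 ≤ t → φ t = 0 := fun t ht =>
    Real.smoothTransition.zero_of_nonpos (by linarith)
  refine ⟨φ, hsmooth, fun a b hab => Real.smoothTransition.monotone (by linarith), hzero, ?_⟩
  obtain ⟨t, ht, hslope⟩ := exists_deriv_eq_slope φ (show (0 : ℝ) < 2 by norm_num)
    hsmooth.continuous.continuousOn (hsmooth.differentiable (by simp)).differentiableOn
  have hone : φ 0 = 1 := Real.smoothTransition.one_of_one_le (by norm_num)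
  refine ⟨t, ht.1, ?_⟩
  rw [hslope, hzero 2 le_rfl, hone]
  norm_num

variable (E) in
theorem exists_isRadialPotential [Nontrivial E] :
    ∃ Γ G : 𝓢(E, ℝ), IsRadialPotential Γ G ∧ 0 < ∫ y, G y := by
  obtain ⟨φ, hφ, hanti, hzero, t, ht, hderiv⟩ := exists_smooth_antitone_cutoff
  have hderiv_zero : ∀ t, 2 ≤ t → -2 * deriv φ t = 0 := fun t ht => by
    have hmin : IsLocalMin φ t := .of_forall fun s => by
      rw [hzero t ht, ← hzero (max s t) (le_max_of_le_right ht)]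
      exact hanti (le_max_left s t)
    rw [hmin.deriv_eq_zero, mul_zero]
  have hΓsupp : HasCompactSupport fun y : E => φ (‖y‖ ^ 2) := hasCompactSupport_comp_norm_sq hzero
  have hGsupp : HasCompactSupport fun y : E => -2 * deriv φ (‖y‖ ^ 2) :=
    hasCompactSupport_comp_norm_sq hderiv_zero
  have hΓsmooth : ContDiff ℝ ∞ fun y : E => φ (‖y‖ ^ 2) := hφ.comp (contDiff_norm_sq ℝ)
  have hGsmooth : ContDiff ℝ ∞ fun y : E => -2 * deriv φ (‖y‖ ^ 2) :=
    contDiff_const.mul ((contDiff_infty_iff_deriv.1 hφ).2.comp (contDiff_norm_sq ℝ))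
  refine ⟨hΓsupp.toSchwartzMap hΓsmooth, hGsupp.toSchwartzMap hGsmooth, fun y w => ?_, ?_⟩
  · have hchain : HasFDerivAt (fun y : E => φ (‖y‖ ^ 2))
        (deriv φ (‖y‖ ^ 2) • (2 • innerSL ℝ y)) y :=
      (hφ.differentiable (by simp) _).hasDerivAt.comp_hasFDerivAt y
        (hasStrictFDerivAt_norm_sq y).hasFDerivAt
    change fderiv ℝ (fun y : E => φ (‖y‖ ^ 2)) y w = -(⟪y, w⟫ * (-2 * deriv φ (‖y‖ ^ 2)))
    simp only [hchain.fderiv, smul_apply, innerSL_apply_apply, smul_eq_mul,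
      nsmul_eq_mul]
    push_cast
    ring
  · obtain ⟨y, hy⟩ := exists_norm_eq E (Real.sqrt_nonneg t)
    refine hGsmooth.continuous.integral_pos_of_hasCompactSupport_nonneg_nonzero hGsupp
      (fun z => ?_) (x := y) ?_
    · exact mul_nonneg_of_nonpos_of_nonpos (by norm_num) hanti.deriv_nonpos
    · change -2 * deriv φ (‖y‖ ^ 2) ≠ 0
      rw [hy, Real.sq_sqrt ht.le]
      exact mul_ne_zero (by norm_num) hderiv

end RadialPotential

theorem abs_mul_integral_le_of_holder {Γ G u ω : 𝓢(E, ℝ)} (hΓ : IsRadialPotential Γ G) {a b : E}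
    (hu : Δ u = ∂_{b} ω) {r H R : ℝ} (hr : 0 < r) (hR : 0 ≤ R)
    (hω : ∀ x y, |ω x - ω y| ≤ H * ‖x - y‖ ^ r) (x : E) :
    |(∂_{a} u) x * ∫ y, G y| ≤ |kernelAverage (∂_{a} u) G x R|
      + H * (∫ y, ‖y‖ ^ r * ‖(∂_{a} (∂_{b} Γ)) y‖) / r * R ^ r := by
  set K := ∫ y, ‖y‖ ^ r * ‖(∂_{a} (∂_{b} Γ)) y‖
  set F := kernelAverage (∂_{a} u) G x
  have hderiv : ∀ s, HasDerivAt F (s * kernelAverage (Δ (∂_{a} u)) Γ x s) s :=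
    hasDerivAt_kernelAverage_of_isRadialPotential hΓ _ x
  have hparts : ∀ s, kernelAverage ω (∂_{a} (∂_{b} Γ)) x s
      = s * (s * kernelAverage (Δ (∂_{a} u)) Γ x s) := fun s => by
    simp only [laplacian_lineDerivOp, hu, lineDerivOp_comm a b, kernelAverage_lineDerivOp_right,
      mul_neg, neg_neg]
  have hbound : ∀ s ∈ Set.Ioc 0 R,
      ‖s * kernelAverage (Δ (∂_{a} u)) Γ x s‖ ≤ H * K * s ^ (r - 1) := fun s hs => by
    have hω' := abs_kernelAverage_le_of_holder (integral_lineDerivOp_eq_zero a (∂_{b} Γ)) hr.le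
      hs.1.le fun z => hω z x
    rw [hparts, abs_mul, abs_of_pos hs.1] at hω'
    rw [Real.rpow_sub_one hs.1.ne', ← mul_div_assoc, le_div_iff₀ hs.1, Real.norm_eq_abs]
    linarith
  have hincr := norm_sub_le_of_norm_deriv_le_rpow hr hR
    (continuous_iff_continuousAt.2 fun s => (hderiv s).continuousAt).continuousOn
    (fun s _ => hderiv s) hbound
  rw [← kernelAverage_zero_scale]
  calc |F 0| ≤ |F R| + |F 0 - F R| := by
        simpa using abs_add_le (F R) (F 0 - F R)
    _ ≤ _ := by gcongr; exact hincr

theorem abs_kernelAverage_lineDerivOp_le_eLpNorm (u g : 𝓢(E, ℝ)) (a x : E) {R : ℝ} (hR : 0 < R) :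
    |kernelAverage (∂_{a} u) g x R| ≤ R ^ (-(1 + Module.finrank ℝ E / 2 : ℝ)) *
      ((eLpNorm u 2 volume).toReal * (eLpNorm (∂_{a} g : 𝓢(E, ℝ)) 2 volume).toReal) := by
  have hparts : kernelAverage (∂_{a} u) g x R = -(R⁻¹ * kernelAverage u (∂_{a} g) x R) := by
    rw [kernelAverage_lineDerivOp_right]
    field_simp
  rw [hparts, abs_neg, abs_mul, abs_of_pos (inv_pos.2 hR), neg_add, Real.rpow_add hR,
    Real.rpow_neg_one, mul_assoc]
  gcongr
  exact abs_kernelAverage_le_eLpNorm u (∂_{a} g) x hR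

theorem exists_abs_lineDerivOp_le_add [Nontrivial E] {r : ℝ} (hr : 0 < r) (a b : E) :
    ∃ C : ℝ, 0 < C ∧ ∀ u ω : 𝓢(E, ℝ), Δ u = ∂_{b} ω → ∀ H : ℝ, 0 ≤ H →
      (∀ x y, |ω x - ω y| ≤ H * ‖x - y‖ ^ r) → ∀ (x : E) (R : ℝ), 0 < R →
      |(∂_{a} u) x| ≤ C * (H * R ^ r
        + (eLpNorm u 2 volume).toReal * R ^ (-(1 + Module.finrank ℝ E / 2 : ℝ))) := by
  obtain ⟨Γ, G, hΓ, hG⟩ := exists_isRadialPotential E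
  set K := ∫ y, ‖y‖ ^ r * ‖(∂_{a} (∂_{b} Γ)) y‖
  set Q := (eLpNorm (∂_{a} G : 𝓢(E, ℝ)) 2 volume).toReal
  have hK : 0 ≤ K := integral_nonneg fun y => by positivity
  refine ⟨(K / r + Q + 1) / ∫ y, G y, by positivity, fun u ω hu H hH hω x R hR => ?_⟩
  set V := (eLpNorm u 2 volume).toReal
  set P := R ^ (-(1 + Module.finrank ℝ E / 2 : ℝ))
  have hV : 0 ≤ V * P := by positivity
  have hmul : |(∂_{a} u) x| * ∫ y, G y ≤ P * (V * Q) + H * K / r * R ^ r :=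
    calc |(∂_{a} u) x| * ∫ y, G y = |(∂_{a} u) x * ∫ y, G y| := by rw [abs_mul, abs_of_pos hG]
      _ ≤ _ := abs_mul_integral_le_of_holder hΓ hu hr hR.le hω x
      _ ≤ _ := by gcongr; exact abs_kernelAverage_lineDerivOp_le_eLpNorm u G a x hR
  rw [div_mul_eq_mul_div, le_div_iff₀ hG]
  calc |(∂_{a} u) x| * ∫ y, G y ≤ P * (V * Q) + H * K / r * R ^ r := hmul
    _ = K / r * (H * R ^ r) + Q * (V * P) := by ring
    _ ≤ (K / r + Q + 1) * (H * R ^ r) + (K / r + Q + 1) * (V * P) := by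
        refine add_le_add (mul_le_mul_of_nonneg_right ?_ (by positivity))
          (mul_le_mul_of_nonneg_right ?_ hV)
        · linarith [show 0 ≤ Q from ENNReal.toReal_nonneg]
        · linarith [div_nonneg hK hr.le]
    _ = _ := by ring

theorem exists_abs_lineDerivOp_le_rpow_mul_rpow [Nontrivial E] {r : ℝ} (hr : 0 < r) (a b : E) :
    ∃ C : ℝ, 0 < C ∧ ∀ u ω : 𝓢(E, ℝ), Δ u = ∂_{b} ω → ∀ H : ℝ, 0 ≤ H →
      (∀ x y, |ω x - ω y| ≤ H * ‖x - y‖ ^ r) → ∀ x : E,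
      |(∂_{a} u) x| ≤ C *
        (eLpNorm u 2 volume).toReal ^ (r / (r + (1 + Module.finrank ℝ E / 2 : ℝ))) *
          H ^ ((1 + Module.finrank ℝ E / 2 : ℝ) / (r + (1 + Module.finrank ℝ E / 2 : ℝ))) := by
  obtain ⟨C, hC, hbound⟩ := exists_abs_lineDerivOp_le_add hr a b
  refine ⟨2 * C, by positivity, fun u ω hu H hH hω x => ?_⟩
  have hopt := le_two_mul_rpow_mul_rpow hr (by positivity) hH ENNReal.toReal_nonneg
    fun R hR => (div_le_iff₀' hC).2 (hbound u ω hu H hH hω x R hR)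
  rw [div_le_iff₀' hC] at hopt
  exact hopt.trans_eq (by ring)

end Schwartz

section HolderSeminorm

open scoped LineDeriv SchwartzMap Laplacian

variable {d : ℕ} {r : ℝ}

theorem norm_sub_le_toReal_holderSemi_mul {F : Type*} [NormedAddCommGroup F] {f : Ed d → F}
    (hr : 0 < r) (hf : holderSemi d r f ≠ ∞) (x y : Ed d) :
    ‖f x - f y‖ ≤ (holderSemi d r f).toReal * ‖x - y‖ ^ r := by
  rcases eq_or_ne x y with rfl | hxy
  · simp [Real.zero_rpow hr.ne']
  have hpos : 0 < ‖x - y‖ := norm_sub_pos_iff.2 hxy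
  have hquot : (‖f x - f y‖₊ : ℝ≥0∞) / (‖x - y‖₊ : ℝ≥0∞) ^ r ≤ holderSemi d r f :=
    le_iSup₂ (f := fun x y => (‖f x - f y‖₊ : ℝ≥0∞) / (‖x - y‖₊ : ℝ≥0∞) ^ r) x y
  have hreal := ENNReal.toReal_mono hf hquot
  rw [ENNReal.toReal_div, ← ENNReal.toReal_rpow] at hreal
  simp only [ENNReal.coe_toReal, coe_nnnorm] at hreal
  rwa [div_le_iff₀ (by positivity)] at hreal

theorem enorm_le_ofReal_mul_rpow_mul_rpow {F : Type*} [NormedAddCommGroup F] {z : F} {C α β : ℝ}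
    {V H : ℝ≥0∞} (hC : 0 < C) (hα : 0 < α) (hβ : 0 < β) (hV : V ≠ ∞) (hzero : V = 0 → z = 0)
    (hz : H ≠ ∞ → ‖z‖ ≤ C * V.toReal ^ α * H.toReal ^ β) :
    ‖z‖ₑ ≤ ENNReal.ofReal C * V ^ α * H ^ β := by
  rcases eq_or_ne V 0 with hV0 | hV0
  · simp [hzero hV0]
  rcases eq_or_ne H ∞ with rfl | hH
  · rw [ENNReal.top_rpow_of_pos hβ, ENNReal.mul_top]
    · exact le_top
    · exact mul_ne_zero (by simpa using hC) (by simp [ENNReal.rpow_eq_zero_iff, hV0, hV])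
  · rw [← ofReal_norm]
    refine (ENNReal.ofReal_le_ofReal (hz hH)).trans_eq ?_
    rw [ENNReal.ofReal_mul (by positivity), ENNReal.ofReal_mul hC.le,
      ← ENNReal.ofReal_rpow_of_nonneg ENNReal.toReal_nonneg hα.le,
      ← ENNReal.ofReal_rpow_of_nonneg ENNReal.toReal_nonneg hβ.le,
      ENNReal.ofReal_toReal hV, ENNReal.ofReal_toReal hH]

theorem exists_enorm_lineDerivOp_le_holderSemi [NeZero d] (hr : 0 < r) (a b : Ed d) :
    ∃ C : ℝ, 0 < C ∧ ∀ u ω : 𝓢(Ed d, ℝ), Δ u = ∂_{b} ω → ∀ x : Ed d,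
      ‖(∂_{a} u) x‖ₑ ≤ ENNReal.ofReal C * eLpNorm u 2 volume ^ (r / (r + (1 + d / 2 : ℝ))) *
        holderSemi d r ω ^ ((1 + d / 2 : ℝ) / (r + (1 + d / 2 : ℝ))) := by
  obtain ⟨C, hC, hbound⟩ := exists_abs_lineDerivOp_le_rpow_mul_rpow hr a b
  simp only [finrank_euclideanSpace_fin] at hbound
  refine ⟨C, hC, fun u ω hu x => ?_⟩
  refine enorm_le_ofReal_mul_rpow_mul_rpow hC (by positivity) (by positivity)
    (u.eLpNorm_lt_top 2 volume).ne (fun hzero => ?_) (fun hω => ?_)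
  · have hu0 : u = 0 :=
      DFunLike.coe_injective (eq_zero_of_eLpNorm_eq_zero u.continuous two_ne_zero hzero)
    simp [hu0, LineDeriv.lineDerivOp_zero]
  · exact hbound u ω hu _ ENNReal.toReal_nonneg (norm_sub_le_toReal_holderSemi_mul hr hω) x

end HolderSeminorm

section VectorField

open scoped LineDeriv SchwartzMap Laplacian

/-- The standard basis vector `e_i` of `ℝ^d`, the direction of the derivative in `pd d i`. -/
noncomputable abbrev stdVec (d : ℕ) (i : Fin d) : Ed d := EuclideanSpace.single i 1

/-- The `i`-th component `v^i` of a Schwartz vector field, as a Schwartz function. -/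
noncomputable def component {m n : ℕ} (v : 𝓢(Ed n, Ed m)) (i : Fin m) : 𝓢(Ed n, ℝ) :=
  SchwartzMap.postcompCLM (𝕜 := ℝ) (EuclideanSpace.proj i : Ed m →L[ℝ] ℝ) v

/-- The vorticity `∂₁v² − ∂₂v¹` of a planar vector field, as a Schwartz function; the coordinates
are numbered from `0`. -/
noncomputable def vorticity (v : 𝓢(Ed 2, Ed 2)) : 𝓢(Ed 2, ℝ) :=
  ∂_{stdVec 2 0} (component v 1) - ∂_{stdVec 2 1} (component v 0)

theorem eLpNorm_component_le {m n : ℕ} (v : 𝓢(Ed n, Ed m)) (i : Fin m) (p : ℝ≥0∞) :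
    eLpNorm (component v i) p volume ≤ eLpNorm v p volume :=
  eLpNorm_mono fun x => PiLp.norm_apply_le (v x) i

theorem fderiv_apply_eq_lineDerivOp_component {m n : ℕ} (v : 𝓢(Ed n, Ed m)) (x w : Ed n)
    (i : Fin m) : fderiv ℝ v x w i = (∂_{w} (component v i)) x := by
  have hproj := ((EuclideanSpace.proj i : Ed m →L[ℝ] ℝ).hasFDerivAt.comp x
    (v.differentiableAt (x := x)).hasFDerivAt).fderiv
  exact (DFunLike.congr_fun hproj w).symm

theorem norm_le_sum_norm_apply {m : ℕ} (z : Ed m) : ‖z‖ ≤ ∑ i, ‖z i‖ := by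
  calc ‖z‖ = ‖∑ i, z i • stdVec m i‖ := by
        conv_lhs => rw [← (EuclideanSpace.basisFun (Fin m) ℝ).sum_repr z]
        simp
    _ ≤ ∑ i, ‖z i‖ := (norm_sum_le _ _).trans_eq (by simp [norm_smul])

theorem norm_le_sum_norm_apply_stdVec {F : Type*} [NormedAddCommGroup F] [NormedSpace ℝ F] {n : ℕ}
    (L : Ed n →L[ℝ] F) : ‖L‖ ≤ ∑ j, ‖L (stdVec n j)‖ := by
  refine L.opNorm_le_bound (by positivity) fun w => ?_
  calc ‖L w‖ = ‖∑ j, w j • L (stdVec n j)‖ := by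
        conv_lhs => rw [← (EuclideanSpace.basisFun (Fin n) ℝ).sum_repr w]
        simp
    _ ≤ ∑ j, ‖w‖ * ‖L (stdVec n j)‖ := norm_sum_le_of_le _ fun j _ => by
        rw [norm_smul]
        gcongr
        exact PiLp.norm_apply_le w j
    _ = (∑ j, ‖L (stdVec n j)‖) * ‖w‖ := by rw [← Finset.mul_sum, mul_comm]

theorem enorm_fderiv_le_sum {m n : ℕ} (v : 𝓢(Ed n, Ed m)) (x : Ed n) :
    ‖fderiv ℝ v x‖ₑ ≤ ∑ i, ∑ j, ‖(∂_{stdVec n j} (component v i)) x‖ₑ := by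
  have hreal : ‖fderiv ℝ v x‖ ≤ ∑ i, ∑ j, ‖(∂_{stdVec n j} (component v i)) x‖ := by
    rw [Finset.sum_comm]
    simp only [← fderiv_apply_eq_lineDerivOp_component]
    exact (norm_le_sum_norm_apply_stdVec _).trans
      (Finset.sum_le_sum fun j _ => norm_le_sum_norm_apply _)
  simpa only [← ofReal_norm, ENNReal.ofReal_sum_of_nonneg, norm_nonneg, Finset.sum_nonneg,
    implies_true] using ENNReal.ofReal_le_ofReal hreal

theorem enorm_vorticity_le_sum (v : 𝓢(Ed 2, Ed 2)) (x : Ed 2) :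
    ‖vorticity v x‖ₑ ≤ ∑ i, ∑ j, ‖(∂_{stdVec 2 j} (component v i)) x‖ₑ := by
  calc ‖vorticity v x‖ₑ
      ≤ ‖(∂_{stdVec 2 0} (component v 1)) x‖ₑ + ‖(∂_{stdVec 2 1} (component v 0)) x‖ₑ :=
        enorm_sub_le
    _ ≤ _ := by
      simp only [Fin.sum_univ_two]
      rw [add_comm]
      gcongr
      · exact le_add_self
      · exact le_self_add

/-- For divergence-free `v`, `Δv` is the perpendicular gradient `(-∂₂ω, ∂₁ω)`. -/
theorem laplacian_component {v : 𝓢(Ed 2, Ed 2)}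
    (hv : ∂_{stdVec 2 0} (component v 0) + ∂_{stdVec 2 1} (component v 1) = 0) (i : Fin 2) :
    Δ (component v i) = ∂_{![-stdVec 2 1, stdVec 2 0] i} (vorticity v) := by
  have hlap (u : 𝓢(Ed 2, ℝ)) :
      Δ u = ∂_{stdVec 2 0} (∂_{stdVec 2 0} u) + ∂_{stdVec 2 1} (∂_{stdVec 2 1} u) := by
    simp [SchwartzMap.laplacian_eq_sum (EuclideanSpace.basisFun (Fin 2) ℝ)]
  have hcomm (u : 𝓢(Ed 2, ℝ)) := lineDerivOp_comm (stdVec 2 0) (stdVec 2 1) u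
  have h0 := eq_neg_of_add_eq_zero_left hv
  have h1 := eq_neg_of_add_eq_zero_right hv
  revert i
  rw [Fin.forall_fin_two]
  constructor
  · change _ = ∂_{-stdVec 2 1} _
    simp only [hlap, vorticity, h0, LineDeriv.lineDerivOp_left_neg, sub_eq_add_neg,
      LineDeriv.lineDerivOp_add, LineDeriv.lineDerivOp_neg, hcomm]
    abel
  · change _ = ∂_{stdVec 2 0} _
    simp only [hlap, vorticity, h1, sub_eq_add_neg, LineDeriv.lineDerivOp_add,
      LineDeriv.lineDerivOp_neg, hcomm]

theorem exists_sum_enorm_lineDerivOp_component_le {r : ℝ} (hr : 0 < r) :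
    ∃ C : ℝ, 0 < C ∧ ∀ v : 𝓢(Ed 2, Ed 2),
      ∂_{stdVec 2 0} (component v 0) + ∂_{stdVec 2 1} (component v 1) = 0 → ∀ x,
      ∑ i, ∑ j, ‖(∂_{stdVec 2 j} (component v i)) x‖ₑ ≤ ENNReal.ofReal C *
        eLpNorm v 2 volume ^ (r / (r + 2)) * holderSemi 2 r (vorticity v) ^ (2 / (r + 2)) := by
  choose C hC hbound using fun i j : Fin 2 =>
    exists_enorm_lineDerivOp_le_holderSemi hr (stdVec 2 j) (![-stdVec 2 1, stdVec 2 0] i : Ed 2)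
  have hexp : (1 + (2 : ℕ) / 2 : ℝ) = 2 := by norm_num
  simp only [hexp] at hbound
  have hnonneg : ∀ i j, 0 ≤ C i j := fun i j => (hC i j).le
  refine ⟨∑ i, ∑ j, C i j, Finset.sum_pos (fun i _ => Finset.sum_pos (fun j _ => hC i j)
    Finset.univ_nonempty) Finset.univ_nonempty, fun v hv x => ?_⟩
  simp only [ENNReal.ofReal_sum_of_nonneg, hnonneg, Finset.sum_nonneg, implies_true, Finset.sum_mul]
  gcongr with i _ j _
  calc ‖(∂_{stdVec 2 j} (component v i)) x‖ₑ
      ≤ ENNReal.ofReal (C i j) * eLpNorm (component v i) 2 volume ^ (r / (r + 2)) *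
          holderSemi 2 r (vorticity v) ^ (2 / (r + 2)) :=
        hbound i j _ _ (laplacian_component hv i) x
    _ ≤ _ := by gcongr; exact eLpNorm_component_le v i 2

end VectorField

theorem stmt8_general (r : ℝ) (hr0 : 0 < r) :
    ∃ C : ℝ, 0 < C ∧ ∀ v : SchwartzMap (Ed 2) (Ed 2),
      (∀ x, pd 2 0 (fun y => v y 0) x + pd 2 1 (fun y => v y 1) x = 0) →
      ((⨆ x, (‖fderiv ℝ (⇑v) x‖₊ : ℝ≥0∞))
          ≤ ENNReal.ofReal C * eLpNorm (⇑v) 2 volume ^ (r / (r + 2)) *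
            holderSemi 2 r
              (fun x => pd 2 0 (fun y => v y 1) x - pd 2 1 (fun y => v y 0) x)
                ^ (2 / (r + 2))) ∧
      ((⨆ x, (‖pd 2 0 (fun y => v y 1) x - pd 2 1 (fun y => v y 0) x‖₊ : ℝ≥0∞))
          ≤ ENNReal.ofReal C * eLpNorm (⇑v) 2 volume ^ (r / (r + 2)) *
            holderSemi 2 r
              (fun x => pd 2 0 (fun y => v y 1) x - pd 2 1 (fun y => v y 0) x)
                ^ (2 / (r + 2))) := by
  obtain ⟨C, hC, hbound⟩ := exists_sum_enorm_lineDerivOp_component_le hr0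
  refine ⟨C, hC, fun v hv => ?_⟩
  have hpartials := hbound v (SchwartzMap.ext hv)
  exact ⟨iSup_le fun x => (enorm_fderiv_le_sum v x).trans (hpartials x),
    iSup_le fun x => (enorm_vorticity_le_sum v x).trans (hpartials x)⟩

/-- For a divergence-free Schwartz vector field `v` on `ℝ²` with vorticity
`ω = ∂₁v² − ∂₂v¹` and `0 < r < 1`:
`‖∇v‖_∞ ≤ C ‖v‖₂^{r/(r+2)} {ω}_r^{2/(r+2)}` and
`‖ω‖_∞ ≤ C ‖v‖₂^{r/(r+2)} {ω}_r^{2/(r+2)}`. -/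
theorem stmt8 (r : ℝ) (hr0 : 0 < r) (hr1 : r < 1) :
    ∃ C : ℝ, 0 < C ∧ ∀ v : SchwartzMap (Ed 2) (Ed 2),
      (∀ x, pd 2 0 (fun y => v y 0) x + pd 2 1 (fun y => v y 1) x = 0) →
      ((⨆ x, (‖fderiv ℝ (⇑v) x‖₊ : ℝ≥0∞))
          ≤ ENNReal.ofReal C * eLpNorm (⇑v) 2 volume ^ (r / (r + 2)) *
            holderSemi 2 r
              (fun x => pd 2 0 (fun y => v y 1) x - pd 2 1 (fun y => v y 0) x)
                ^ (2 / (r + 2))) ∧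
      ((⨆ x, (‖pd 2 0 (fun y => v y 1) x - pd 2 1 (fun y => v y 0) x‖₊ : ℝ≥0∞))
          ≤ ENNReal.ofReal C * eLpNorm (⇑v) 2 volume ^ (r / (r + 2)) *
            holderSemi 2 r
              (fun x => pd 2 0 (fun y => v y 1) x - pd 2 1 (fun y => v y 0) x)
                ^ (2 / (r + 2))) :=
  stmt8_general r hr0
end
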